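/- Every left-full computable instance of the cross-constraint problem has a solution (X^i,Y^i)_{i<2} such that the jump of (X⁰,Y⁰) ⊕ (X¹,Y¹) is Turing reducible to ∅′ (i.e., the join of the solution is low). -/

import Mathlib

namespace Paper

/-- Codes for oracle Turing machines. -/
inductive OCode : Type
  | zero | succ | left | right | oracle
  | pair (a b : OCode) | comp (a b : OCode) | prec (a b : OCode) | rfind' (a : OCode)

/-- Evaluation of an oracle code with oracle `O`. -/
def oeval (O : ℕ → ℕ) : OCode → ℕ →. ℕ
  | .zero => pure 0
  | .succ => Nat.succ
  | .left => ↑fun n : ℕ => n.unpair.1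
  | .right => ↑fun n : ℕ => n.unpair.2
  | .oracle => ↑fun n : ℕ => O n
  | .pair cf cg => fun n => Nat.pair <$> oeval O cf n <*> oeval O cg n
  | .comp cf cg => fun n => oeval O cg n >>= oeval O cf
  | .prec cf cg =>
    Nat.unpaired fun a n =>
      n.rec (oeval O cf a) fun y IH => do
        let i ← IH
        oeval O cg (Nat.pair a (Nat.pair y i))
  | .rfind' cf =>
    Nat.unpaired fun a m =>
      (Nat.rfind fun n => (fun m => m = 0) <$> oeval O cf (Nat.pair a (n + m))).map (· + m)

/-- A numbering of oracle codes. -/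
def encodeOCode : OCode → ℕ
  | .zero => 0
  | .succ => 1
  | .left => 2
  | .right => 3
  | .oracle => 4
  | .pair a b => 4 * Nat.pair (encodeOCode a) (encodeOCode b) + 5
  | .comp a b => 4 * Nat.pair (encodeOCode a) (encodeOCode b) + 6
  | .prec a b => 4 * Nat.pair (encodeOCode a) (encodeOCode b) + 7
  | .rfind' a => 4 * encodeOCode a + 8

/-- The Turing jump of an oracle. -/
def jump (O : ℕ → ℕ) : Set ℕ :=
  { n | ∃ c : OCode, encodeOCode c = n.unpair.1 ∧ (oeval O c n.unpair.2).Dom }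

/-- `f` is (total) recursive in the oracle `O`. -/
def RecIn (O : ℕ → ℕ) (f : ℕ → ℕ) : Prop :=
  ∃ c : OCode, ∀ n, oeval O c n = Part.some (f n)

/-- The all-zero (trivial, computable) oracle. -/
def zeroO : ℕ → ℕ := fun _ => 0

/-- Characteristic function of a set of naturals. -/
noncomputable def chi (A : Set ℕ) : ℕ → ℕ := A.indicator fun _ => 1

/-- Turing join of two oracles. -/
def joinF (f g : ℕ → ℕ) : ℕ → ℕ := fun n => if n % 2 = 0 then f (n / 2) else g (n / 2)

/-- `A` is Σ⁰₁ relative to the oracle `O` (c.e. in `O`). -/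
def SigmaIn (O : ℕ → ℕ) (A : Set ℕ) : Prop :=
  ∃ c : OCode, ∀ n, n ∈ A ↔ (oeval O c n).Dom

/-- The halting problem `∅′`. -/
noncomputable def emptyJump : Set ℕ := jump zeroO

end Paper
namespace Paper

abbrev Str3 := List (Fin 3)
abbrev StrTup (r : ℕ) := Fin r → List (Fin 2)

/-- A cross-tree `T ⊆ 3^{<ℕ} × (2^{<ℕ})^r`. -/
structure CrossTree (r : ℕ) where
  mem : Set (Str3 × StrTup r)
  len_eq : ∀ p ∈ mem, ∀ i j : Fin r, (p.2 i).length = (p.2 j).length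
  len_le : ∀ p ∈ mem, ∀ i : Fin r, (p.2 i).length ≤ p.1.length
  closed : ∀ p ∈ mem, ∀ q : Str3 × StrTup r, q.1 <+: p.1 → (∀ i, q.2 i <+: p.2 i) →
    (∀ i j : Fin r, (q.2 i).length = (q.2 j).length) →
    (∀ i : Fin r, (q.2 i).length ≤ q.1.length) → q ∈ mem

/-- Length-`n` initial segment of an infinite sequence. -/
def seg {α : Type} (X : ℕ → α) (n : ℕ) : List α := List.ofFn fun i : Fin n => X i

/-- `(X, Y)` is an infinite path of the cross-tree `T`. -/
def IsPath {r : ℕ} (T : CrossTree r) (X : ℕ → Fin 3) (Y : Fin r → ℕ → Fin 2) : Prop :=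
  ∀ n, (seg X n, fun i => seg (Y i) n) ∈ T.mem

/-- The infinite sequence `X` extends the finite string `ρ`. -/
def ExtendsL {α : Type} (X : ℕ → α) (ρ : List α) : Prop :=
  ∀ i : Fin ρ.length, X i = ρ.get i

/-- `T` is left-full below `(ρ, σ)`. -/
def LeftFullBelow {r : ℕ} (T : CrossTree r) (ρ : Str3) (σ : StrTup r) : Prop :=
  ∀ X : ℕ → Fin 3, ExtendsL X ρ →
    ∃ Y : Fin r → ℕ → Fin 2, (∀ i, ExtendsL (Y i) (σ i)) ∧ IsPath T X Y

/-- `T` is left-full (below the pair of empty stems). -/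
def LeftFull {r : ℕ} (T : CrossTree r) : Prop := LeftFullBelow T [] fun _ => []

/-- Encoding of nodes of a cross-tree as natural numbers. -/
def encNode {r : ℕ} (p : Str3 × StrTup r) : ℕ :=
  Nat.pair (Encodable.encode p.1) (Encodable.encode (List.ofFn p.2))

/-- The cross-tree `T` is computable. -/
def TreeComputable {r : ℕ} (T : CrossTree r) : Prop :=
  RecIn zeroO (chi {n | ∃ p ∈ T.mem, encNode p = n})

/-- A solution to the cross-constraint problem on instance `T`: a pair of paths whose
first components are finitely compatible and whose second components are pairwise
infinitely compatible. -/
def CCSolution {r : ℕ} (T : CrossTree r) (X : Fin 2 → ℕ → Fin 3)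
    (Y : Fin 2 → Fin r → ℕ → Fin 2) : Prop :=
  (∀ i : Fin 2, IsPath T (X i) (Y i)) ∧
  (∀ j : Fin 3, {n | X 0 n = j ∧ X 1 n = j}.Finite) ∧
  (∀ s : Fin r, ∃ j : Fin 2, {n | Y 0 s n = j ∧ Y 1 s n = j}.Infinite)

/-- Oracle encoding a path `(X, Y)` of a cross-tree. -/
def solOracle {r : ℕ} (X : ℕ → Fin 3) (Y : Fin r → ℕ → Fin 2) : ℕ → ℕ := fun n =>
  if n.unpair.1 = 0 then (X n.unpair.2 : ℕ)
  else if h : n.unpair.1 - 1 < r then (Y ⟨n.unpair.1 - 1, h⟩ n.unpair.2 : ℕ) else 0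

end Paper

namespace Paper

/-!
Call a set `L` of components locked if there are a stem `ρ` and a low `Z` such that every `X`
extending `ρ` has a companion `Y` for which `(X, Y)` is a path agreeing with `Z` past `ρ` on `L`.
Fix a maximal locked `L`. Over its lock, build `r + 1` paths `(X i, Y i)`, each low over the
previous ones: `X i` follows a generic `H i`, except that it is `0` wherever an earlier `X j` is
not `0`, and `Y i` comes from the low basis theorem. Thus at each place at most one `X i` is
nonzero, and there is an `X'` that avoids `0` and that value everywhere; it is finitely compatible
with every `X i`. Let `Y'` be a low companion of `X'`.

If no `Y i` were infinitely compatible with `Y'`, then by the pigeonhole principle two of them,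
`Y i` and `Y j` with `i < j`, would eventually differ from `Y'`, hence eventually agree, in the
same component `s ∉ L`. By genericity of `H j` a finite part of it forces a companion agreeing
with `Y i` at `s`; after approximating the record of earlier nonzero values by one that is
eventually `0`, no restriction on the extensions remains, so `L ∪ {s}` is locked, contradicting
maximality.
-/

open Encodable Filter
open Nat.Partrec (Code)

section RecursivelyEnumerable

variable {α β : Type} [Primcodable α] [Primcodable β]

theorem exists_code_of_rePred {p : α → Prop} (hp : REPred p) :
    ∃ c : Code, ∀ a, p a ↔ (c.eval (encode a)).Dom := by
  obtain ⟨c, hc⟩ := Code.exists_code.1 hp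
  exact ⟨c, fun a => by simp [hc, Part.assert]⟩

theorem dom_eval_iff_exists_evaln {c : Code} {n : ℕ} :
    (c.eval n).Dom ↔ ∃ k, (c.evaln k n).isSome := by
  simp only [Part.dom_iff_mem, Code.evaln_complete, Option.isSome_iff_exists, Option.mem_def]
  exact exists_comm

theorem isSome_evaln_mono {c : Code} {n k k' : ℕ} (hk : k ≤ k') (h : (c.evaln k n).isSome) :
    (c.evaln k' n).isSome := by
  obtain ⟨y, hy⟩ := Option.isSome_iff_exists.1 h
  exact Option.isSome_iff_exists.2 ⟨y, Code.evaln_mono hk hy⟩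

theorem rePred_of_primrecPred {p : α → Prop} (hp : PrimrecPred p) : REPred p :=
  hp.computablePred.to_re

theorem primrecRel_mem : PrimrecRel fun (a : α) (l : List α) => a ∈ l :=
  ((Primrec.eq (α := α)).exists_mem_list.comp .snd .fst).of_eq fun x => by simp

theorem rePred_comp {p : β → Prop} (hp : REPred p) {f : α → β} (hf : Primrec f) :
    REPred fun a => p (f a) :=
  Partrec.comp hp hf.to_comp

theorem rePred_and {p q : α → Prop} (hp : REPred p) (hq : REPred q) :
    REPred fun a => p a ∧ q a := by
  refine (Partrec.bind hp (hq.comp Computable.fst).to₂).dom_re.of_eq fun a => ?_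
  simp [Part.assert]

theorem rePred_or {p q : α → Prop} (hp : REPred p) (hq : REPred q) :
    REPred fun a => p a ∨ q a := by
  obtain ⟨f, hf, hdom⟩ := Partrec.merge' hp hq
  exact hf.dom_re.of_eq fun a => by simpa [Part.assert] using (hdom a).2

theorem rePred_exists {p : α × β → Prop} (hp : REPred p) : REPred fun a => ∃ b, p (a, b) := by
  obtain ⟨c, hc⟩ := exists_code_of_rePred hp
  have search : Partrec fun a : α => Nat.rfindOpt fun n =>
      (decode n : Option (β × ℕ)).bind fun x => c.evaln x.2 (encode (a, x.1)) := by
    refine Partrec.rfindOpt (Computable.option_bind (Computable.decode.comp Computable.snd) ?_)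
    refine (Code.primrec_evaln.comp (.pair (.pair (Primrec.snd.comp .snd) (.const c))
      (Primrec.encode.comp (.pair (Primrec.fst.comp .fst) (Primrec.fst.comp .snd))))).to_comp
  refine search.dom_re.of_eq fun a => ?_
  simp only [Nat.rfindOpt_dom, hc, dom_eval_iff_exists_evaln, Option.isSome_iff_exists]
  constructor
  · rintro ⟨n, y, h⟩
    obtain ⟨x, -, hx⟩ := Option.bind_eq_some_iff.1 h
    exact ⟨x.1, x.2, y, hx⟩
  · rintro ⟨b, k, y, h⟩
    exact ⟨encode (b, k), y, by simpa using h⟩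

theorem rePred_forall_mem_list {p : α × β → Prop} (hp : REPred p) :
    REPred fun x : α × List β => ∀ b ∈ x.2, p (x.1, b) := by
  obtain ⟨c, hc⟩ := exists_code_of_rePred hp
  have bounded : PrimrecRel fun (b : β) (x : α × ℕ) => (c.evaln x.2 (encode (x.1, b))).isSome :=
    Primrec.eq.comp (Primrec.option_isSome.comp (Code.primrec_evaln.comp
      (.pair (.pair (Primrec.snd.comp .snd) (.const c))
        (Primrec.encode.comp (.pair (Primrec.fst.comp .snd) .fst))))) (.const true)
  refine (rePred_exists (rePred_of_primrecPred (bounded.forall_mem_list.comp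
    (f := fun y : (α × List β) × ℕ => y.1.2) (g := fun y => (y.1.1, y.2))
    (Primrec.snd.comp .fst) (.pair (Primrec.fst.comp .fst) .snd)))).of_eq fun x => ?_
  constructor
  · rintro ⟨k, h⟩ b hb
    exact (hc _).2 (dom_eval_iff_exists_evaln.2 ⟨k, h b hb⟩)
  · intro h
    have eventually : ∀ b ∈ x.2, ∀ᶠ k in atTop, (c.evaln k (encode (x.1, b))).isSome := by
      intro b hb
      obtain ⟨k, hk⟩ := dom_eval_iff_exists_evaln.1 ((hc _).1 (h b hb))
      exact eventually_atTop.2 ⟨k, fun k' hk' => isSome_evaln_mono hk' hk⟩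
    exact ((List.finite_toSet x.2).eventually_all.2 eventually).exists

end RecursivelyEnumerable

section Segments

variable {α β : Type}

theorem seg_eq_map_range (X : ℕ → α) (n : ℕ) : seg X n = (List.range n).map X := by
  rw [seg, List.ofFn_eq_map, ← List.map_coe_finRange_eq_range, List.map_map]
  rfl

@[simp]
theorem length_seg (X : ℕ → α) (n : ℕ) : (seg X n).length = n := by
  simp [seg]

theorem getElem?_seg (X : ℕ → α) (n i : ℕ) :
    (seg X n)[i]? = if i < n then some (X i) else none := by
  split_ifs with h <;> simp [seg, h]

theorem getElem?_seg_of_lt (X : ℕ → α) {n i : ℕ} (h : i < n) : (seg X n)[i]? = some (X i) := by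
  rw [getElem?_seg, if_pos h]

theorem take_seg (X : ℕ → α) (n k : ℕ) : (seg X n).take k = seg X (min k n) := by
  rw [seg_eq_map_range, seg_eq_map_range, ← List.map_take, List.take_range]

theorem seg_prodMk (X : ℕ → α) (Y : ℕ → β) (n : ℕ) :
    seg (fun i => (X i, Y i)) n = (seg X n).zip (seg Y n) := by
  simp [seg_eq_map_range, List.zip_map']

theorem seg_comp (f : α → β) (X : ℕ → α) (n : ℕ) : seg (fun i => f (X i)) n = (seg X n).map f := by
  simp [seg_eq_map_range]

/-- The sequence obtained from `X` by replacing its initial segment of length `ρ.length` by `ρ`. -/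
def overwrite (ρ : List α) (X : ℕ → α) (n : ℕ) : α := ρ.getD n (X n)

theorem overwrite_of_length_le {ρ : List α} (X : ℕ → α) {n : ℕ} (h : ρ.length ≤ n) :
    overwrite ρ X n = X n :=
  List.getD_eq_default _ _ h

theorem seg_overwrite (ρ : List α) (X : ℕ → α) : seg (overwrite ρ X) ρ.length = ρ := by
  refine List.ext_getElem (length_seg _ _) fun i _ hi => ?_
  simp [seg, overwrite]

theorem overwrite_seg_of_lt (X Y : ℕ → α) {n k : ℕ} (h : n < k) :
    overwrite (seg X k) Y n = X n := by
  simp [overwrite, List.getD_eq_getElem?_getD, getElem?_seg_of_lt X h]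

theorem overwrite_seg_self (X : ℕ → α) (k : ℕ) : overwrite (seg X k) X = X := by
  funext n
  rcases lt_or_ge n k with h | h
  · exact overwrite_seg_of_lt X X h
  · exact overwrite_of_length_le X (by simpa using h)

theorem isOpen_setOf_seg [TopologicalSpace α] [DiscreteTopology α] (k : ℕ) (p : List α → Prop) :
    IsOpen {X : ℕ → α | p (seg X k)} := by
  have restrict : Continuous fun (X : ℕ → α) (i : Fin k) => X i := by fun_prop
  exact (isOpen_discrete {w : Fin k → α | p (List.ofFn w)}).preimage restrict

theorem fan_theorem [Finite α] {p : List α → Prop} (bar : ∀ X : ℕ → α, ∃ k, p (seg X k)) :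
    ∃ m, ∀ X : ℕ → α, ∃ k ≤ m, p (seg X k) := by
  let : TopologicalSpace α := ⊥
  have : DiscreteTopology α := ⟨rfl⟩
  obtain ⟨m, hm⟩ := isCompact_univ.elim_directed_cover
    (fun m => ⋃ k ≤ m, {X : ℕ → α | p (seg X k)})
    (fun m => isOpen_biUnion fun k _ => isOpen_setOf_seg k p)
    (fun X _ => let ⟨k, hk⟩ := bar X; by simpa using ⟨k, k, le_rfl, hk⟩)
    (Monotone.directed_le fun m m' h => Set.biUnion_mono (fun k hk => le_trans hk h)
      fun _ _ => le_rfl)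
  exact ⟨m, fun X => by simpa using hm (Set.mem_univ X)⟩

/-- The words of length `k` over a finite alphabet. -/
noncomputable def words (α : Type) [Fintype α] : ℕ → List (List α)
  | 0 => [[]]
  | k + 1 => (words α k).flatMap fun w => Finset.univ.toList.map (· :: w)

theorem mem_words [Fintype α] {k : ℕ} {w : List α} : w ∈ words α k ↔ w.length = k := by
  induction k generalizing w with
  | zero => simp [words, List.length_eq_zero_iff]
  | succ k ih => cases w <;> simp [words, ih]

theorem exists_seg_eq_of_prefixes [Inhabited α] {s : ℕ → List α} {a : α}
    (hs : ∀ n, s n ++ [a] <+: s (n + 1)) : ∃ H : ℕ → α, ∀ n, seg H (s n).length = s n := by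
  have length_ge (n : ℕ) : n ≤ (s n).length := by
    induction n with
    | zero => exact Nat.zero_le _
    | succ n ih => simpa using (Nat.succ_le_succ ih).trans (by simpa using (hs n).length_le)
  have mono {m n : ℕ} (h : m ≤ n) : s m <+: s n := by
    induction n, h using Nat.le_induction with
    | base => exact List.prefix_rfl
    | succ n _ ih => exact (ih.trans (List.prefix_append _ _)).trans (hs n)
  refine ⟨fun i => (s (i + 1)).getD i default, fun n => ?_⟩
  refine List.ext_getElem (length_seg _ _) fun i _ hi => ?_
  have hi' : i < (s (i + 1)).length := length_ge (i + 1)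
  simp only [seg, List.getElem_ofFn, List.getD_eq_getElem _ _ hi']
  rcases le_total n (i + 1) with h | h
  · exact ((mono h).getElem hi).symm
  · exact (mono h).getElem hi'

end Segments

section SigmaOne

variable {α β γ δ ε : Type} [Primcodable α] [Primcodable β] [Primcodable γ] [Primcodable δ]
  [Primcodable ε]

/-- A relation between a sequence and a finite parameter is `Σ⁰₁` if it is witnessed by an initial
segment of the sequence, uniformly recursively enumerably. -/
def IsSigma1 (P : (ℕ → α) → δ → Prop) : Prop :=
  ∃ R : List α × δ → Prop, REPred R ∧ ∀ X d, P X d ↔ ∃ k, R (seg X k, d)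

namespace IsSigma1

theorem of_rePred {p : δ → Prop} (hp : REPred p) : IsSigma1 fun (_ : ℕ → α) d => p d :=
  ⟨fun x => p x.2, rePred_comp hp .snd, fun _ _ => ⟨fun h => ⟨0, h⟩, fun ⟨_, h⟩ => h⟩⟩

theorem of_seg {R : List α × δ → Prop} (hR : REPred R) :
    IsSigma1 fun (X : ℕ → α) d => ∃ k, R (seg X k, d) :=
  ⟨R, hR, fun _ _ => Iff.rfl⟩

theorem exists_prefix_closed {P : (ℕ → α) → δ → Prop} (hP : IsSigma1 P) :
    ∃ R : List α × δ → Prop, REPred R ∧ (∀ X d, P X d ↔ ∃ k, R (seg X k, d)) ∧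
      ∀ X d, Monotone fun k => R (seg X k, d) := by
  obtain ⟨R, hR, hPR⟩ := hP
  refine ⟨fun x => ∃ j, R (x.1.take j, x.2), rePred_exists (rePred_comp hR
    (.pair (Primrec.list_take.comp .snd (Primrec.fst.comp .fst)) (Primrec.snd.comp .fst))),
    fun X d => ?_, fun X d k k' hk => ?_⟩
  · simp only [hPR, take_seg]
    exact ⟨fun ⟨k, h⟩ => ⟨k, k, by simpa using h⟩, fun ⟨k, j, h⟩ => ⟨min j k, h⟩⟩
  · simp only [take_seg]
    exact fun ⟨j, h⟩ => ⟨min j k, by rwa [min_assoc, min_eq_left hk]⟩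

theorem comp {P : (ℕ → α) → ε → Prop} (hP : IsSigma1 P) {g : δ → ε} (hg : Primrec g) :
    IsSigma1 fun X d => P X (g d) := by
  obtain ⟨R, hR, hPR⟩ := hP
  exact ⟨fun x => R (x.1, g x.2), rePred_comp hR (.pair .fst (hg.comp .snd)), fun X d => hPR X _⟩

theorem and {P Q : (ℕ → α) → δ → Prop} (hP : IsSigma1 P) (hQ : IsSigma1 Q) :
    IsSigma1 fun X d => P X d ∧ Q X d := by
  obtain ⟨R, hR, hPR, monoR⟩ := hP.exists_prefix_closed
  obtain ⟨S, hS, hQS, monoS⟩ := hQ.exists_prefix_closed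
  refine ⟨fun x => R x ∧ S x, rePred_and hR hS, fun X d => ?_⟩
  simp only [hPR, hQS]
  constructor
  · rintro ⟨⟨k, hk⟩, m, hm⟩
    exact ⟨max k m, monoR X d (le_max_left k m) hk, monoS X d (le_max_right k m) hm⟩
  · rintro ⟨k, hk, hm⟩
    exact ⟨⟨k, hk⟩, k, hm⟩

theorem or {P Q : (ℕ → α) → δ → Prop} (hP : IsSigma1 P) (hQ : IsSigma1 Q) :
    IsSigma1 fun X d => P X d ∨ Q X d := by
  obtain ⟨R, hR, hPR⟩ := hP
  obtain ⟨S, hS, hQS⟩ := hQ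
  exact ⟨fun x => R x ∨ S x, rePred_or hR hS, fun X d => by simp only [hPR, hQS, exists_or]⟩

theorem exists_param {P : (ℕ → α) → δ × ε → Prop} (hP : IsSigma1 P) :
    IsSigma1 fun X d => ∃ e, P X (d, e) := by
  obtain ⟨R, hR, hPR⟩ := hP
  refine ⟨fun x => ∃ e, R (x.1, x.2, e), rePred_exists (p := fun y : (List α × δ) × ε =>
    R (y.1.1, y.1.2, y.2)) (rePred_comp hR (.pair (Primrec.fst.comp .fst)
      (.pair (Primrec.snd.comp .fst) .snd))), fun X d => ?_⟩
  simp only [hPR]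
  exact exists_comm

theorem comap {P : (ℕ → β) → δ → Prop} (hP : IsSigma1 P) {φ : ℕ → α → β} (hφ : Primrec₂ φ)
    {v : ℕ → ℕ} (hv : Primrec v) (v_le : ∀ m, v m ≤ m) :
    IsSigma1 fun X d => P (fun m => φ m (X (v m))) d := by
  obtain ⟨R, hR, hPR⟩ := hP
  let translate (l : List α) : List β :=
    (List.range l.length).filterMap fun m => l[v m]?.map (φ m)
  have translate_primrec : Primrec translate := by
    refine Primrec.listFilterMap (Primrec.list_range.comp Primrec.list_length) ?_
    exact Primrec.option_map (Primrec.list_getElem?.comp .fst (hv.comp .snd))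
      (hφ.comp (Primrec.snd.comp .fst) .snd)
  have translate_seg (X : ℕ → α) (k : ℕ) :
      translate (seg X k) = seg (fun m => φ m (X (v m))) k := by
    simp only [translate, length_seg]
    rw [seg_eq_map_range (fun m => φ m _), ← List.filterMap_eq_map]
    refine List.filterMap_congr fun m hm => ?_
    simp [getElem?_seg_of_lt X ((v_le m).trans_lt (List.mem_range.1 hm))]
  refine ⟨fun x => R (translate x.1, x.2),
    rePred_comp hR (.pair (translate_primrec.comp .fst) .snd), fun X d => ?_⟩
  simp only [hPR, translate_seg]

theorem comap_pointwise {P : (ℕ → β) → δ → Prop} (hP : IsSigma1 P) {φ : ℕ → α → β}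
    (hφ : Primrec₂ φ) : IsSigma1 fun X d => P (fun m => φ m (X m)) d :=
  hP.comap hφ .id fun _ => le_rfl

theorem exists_forces {P : (ℕ → α × β) → δ → Prop} (hP : IsSigma1 P) :
    ∃ F : (ℕ → α) → List β × δ → Prop, IsSigma1 F ∧
      (∀ X t d, F X (t, d) → ∀ Y, P (fun n => (X n, overwrite t Y n)) d) ∧
      ∀ X Y d, P (fun n => (X n, Y n)) d → ∀ᶠ k in atTop, F X (seg Y k, d) := by
  obtain ⟨R, hR, hPR⟩ := hP
  have interleaving : PrimrecPred fun y : (List α × List β × δ) × List (α × β) =>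
      y.2.map Prod.fst = y.1.1 ∧ y.2.map Prod.snd = y.1.2.1.take y.1.1.length :=
    (Primrec.eq.comp (Primrec.list_map .snd (Primrec.fst.comp .snd).to₂)
      (Primrec.fst.comp .fst)).and
      (Primrec.eq.comp (Primrec.list_map .snd (Primrec.snd.comp .snd).to₂)
        (Primrec.list_take.comp (Primrec.list_length.comp (Primrec.fst.comp .fst))
          (Primrec.fst.comp (Primrec.snd.comp .fst))))
  refine ⟨_, of_seg (rePred_exists (rePred_and (rePred_of_primrecPred interleaving)
    (rePred_comp hR (.pair .snd (Primrec.snd.comp (Primrec.snd.comp .fst)))))), ?_, ?_⟩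
  · rintro X t d ⟨k, l, ⟨hX, ht⟩, hl⟩ Y
    dsimp only at hX ht hl
    have hk : k ≤ t.length := by
      have lengthX := congrArg List.length hX
      have length_t := congrArg List.length ht
      simp only [List.length_map, length_seg, List.length_take] at lengthX length_t
      omega
    rw [length_seg, ← seg_overwrite t Y, take_seg, min_eq_left hk] at ht
    refine (hPR _ _).2 ⟨k, ?_⟩
    rwa [seg_prodMk, ← List.zip_of_prod hX ht]
  · intro X Y d h
    obtain ⟨k, hk⟩ := (hPR _ _).1 h
    filter_upwards [eventually_ge_atTop k] with m hm
    refine ⟨k, _, ⟨?_, ?_⟩, hk⟩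
    · rw [← seg_comp]
    · rw [← seg_comp, length_seg, take_seg, min_eq_left hm]

theorem forall_mem_list {P : (ℕ → α) → δ × ε → Prop} (hP : IsSigma1 P) :
    IsSigma1 fun X (x : δ × List ε) => ∀ e ∈ x.2, P X (x.1, e) := by
  obtain ⟨R, hR, hPR, mono⟩ := hP.exists_prefix_closed
  refine ⟨fun x => ∀ e ∈ x.2.2, R (x.1, x.2.1, e), ?_, fun X x => ?_⟩
  · exact rePred_comp (rePred_forall_mem_list (p := fun y : (List α × δ) × ε =>
      R (y.1.1, y.1.2, y.2)) (rePred_comp hR (.pair (Primrec.fst.comp .fst)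
        (.pair (Primrec.snd.comp .fst) .snd))))
      (.pair (.pair .fst (Primrec.fst.comp .snd)) (Primrec.snd.comp .snd))
  · simp only [hPR]
    refine ⟨fun h => ?_, fun ⟨k, h⟩ e he => ⟨k, h e he⟩⟩
    have eventually : ∀ e ∈ x.2, ∀ᶠ k in atTop, R (seg X k, x.1, e) := fun e he =>
      let ⟨k, hk⟩ := h e he
      eventually_atTop.2 ⟨k, fun m hm => mono X _ hm hk⟩
    exact ((List.finite_toSet x.2).eventually_all.2 eventually).exists

theorem exists_sequence [Inhabited β] {P : (ℕ → α × β) → δ → Prop} (hP : IsSigma1 P) :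
    IsSigma1 fun X d => ∃ Y : ℕ → β, P (fun n => (X n, Y n)) d := by
  obtain ⟨F, hF, sound, complete⟩ := hP.exists_forces
  have existsF : IsSigma1 fun X d => ∃ t, F X (t, d) :=
    (hF.comp (.pair .snd .fst)).exists_param
  convert existsF using 4 with X d
  exact ⟨fun ⟨Y, h⟩ => (complete X Y d h).exists.imp' _ fun _ => id,
    fun ⟨t, h⟩ => ⟨_, sound X t d h default⟩⟩

end IsSigma1

/-- `K` is a universal `Σ⁰₁` relation: every other one is a section of it. -/
def IsUniversalSigma1 (K : (ℕ → α) → ℕ → Prop) : Prop :=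
  IsSigma1 K ∧ ∀ {δ : Type} [Primcodable δ] {P : (ℕ → α) → δ → Prop}, IsSigma1 P →
    ∃ g : δ → ℕ, Primrec g ∧ ∀ X d, P X d ↔ K X (g d)

theorem exists_isUniversalSigma1 (α : Type) [Primcodable α] :
    ∃ K : (ℕ → α) → ℕ → Prop, IsUniversalSigma1 K := by
  let run (x : List α × ℕ) : Part ℕ :=
    (Denumerable.ofNat Code x.2.unpair.1).eval (Nat.pair (encode x.1) x.2.unpair.2)
  have run_partrec : Partrec run := by
    refine Code.eval_part.comp (Primrec.to_comp ?_) (Primrec.to_comp ?_)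
    · exact (Primrec.ofNat Code).comp (Primrec.fst.comp (Primrec.unpair.comp .snd))
    · exact Primrec₂.natPair.comp (Primrec.encode.comp .fst)
        (Primrec.snd.comp (Primrec.unpair.comp .snd))
  refine ⟨_, IsSigma1.of_seg run_partrec.dom_re, fun {δ} _ {P} ⟨R, hR, hPR⟩ => ?_⟩
  obtain ⟨c, hc⟩ := exists_code_of_rePred hR
  refine ⟨fun d => Nat.pair (encode c) (encode d),
    Primrec₂.natPair.comp (.const _) .encode, fun X d => ?_⟩
  simp [hPR, hc, run]

theorem primrec_words [Fintype β] : Primrec (words β) := by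
  have extend : Primrec₂ fun (_ : ℕ × List (List β)) (w : List β) =>
      Finset.univ.toList.map (· :: w) :=
    Primrec.list_map (.const _) (Primrec.list_cons.comp₂ .right (Primrec.snd.comp .fst).to₂)
  refine (Primrec.nat_rec₁ [[]] (Primrec.list_flatMap .snd extend).to₂).of_eq fun k => ?_
  induction k with
  | zero => rfl
  | succ k ih => rw [words, ← ih]

namespace IsSigma1

theorem forall_sequence [Finite β] [Inhabited β] {P : (ℕ → α × β) → δ → Prop} (hP : IsSigma1 P) :
    IsSigma1 fun X d => ∀ Y : ℕ → β, P (fun n => (X n, Y n)) d := by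
  have := Fintype.ofFinite β
  obtain ⟨F, hF, sound, complete⟩ := hP.exists_forces
  have bar : IsSigma1 fun X d => ∃ k, ∀ w ∈ words β k, ∃ j, F X (w.take j, d) :=
    .exists_param <| .comp (.forall_mem_list <| .exists_param <|
      hF.comp (δ := (δ × List β) × ℕ) (.pair (Primrec.list_take.comp .snd (Primrec.snd.comp .fst))
        (Primrec.fst.comp .fst))) (.pair .fst (primrec_words.comp .snd))
  convert bar using 3 with X d
  constructor
  · intro h
    obtain ⟨k, hk⟩ := fan_theorem (p := fun w => F X (w, d)) fun Y => (complete X Y d (h Y)).exists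
    refine ⟨k, fun w hw => ?_⟩
    obtain ⟨j, hj, hF⟩ := hk (overwrite w default)
    refine ⟨j, ?_⟩
    rwa [← seg_overwrite w default, take_seg, mem_words.1 hw, min_eq_left hj]
  · rintro ⟨k, hk⟩ Y
    obtain ⟨j, hj⟩ := hk (seg Y k) (mem_words.2 (length_seg Y k))
    have := sound X _ d hj Y
    rwa [take_seg, overwrite_seg_self] at this

end IsSigma1

/-- A `Π⁰₁` class: the complement is enumerated by initial segments. -/
def IsPi1Class (C : Set (ℕ → α)) : Prop := IsSigma1 fun X (_ : Unit) => X ∉ C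

namespace IsPi1Class

theorem preimage {C : Set (ℕ → β)} (hC : IsPi1Class C) {φ : ℕ → α → β} (hφ : Primrec₂ φ) :
    IsPi1Class {X | (fun n => φ n (X n)) ∈ C} :=
  hC.comap_pointwise hφ

theorem inter {C D : Set (ℕ → α)} (hC : IsPi1Class C) (hD : IsPi1Class D) :
    IsPi1Class (C ∩ D) := by
  simpa only [IsPi1Class, Set.mem_inter_iff, not_and_or] using IsSigma1.or hC hD

theorem setOf_forall_apply {p : ℕ → α → Prop} (hp : PrimrecRel p) :
    IsPi1Class {X | ∀ n, p n (X n)} := by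
  have violated : PrimrecPred fun x : (List α × Unit) × ℕ × α =>
      x.1.1[x.2.1]? = some x.2.2 ∧ ¬p x.2.1 x.2.2 :=
    (Primrec.eq.comp (Primrec.list_getElem?.comp (Primrec.fst.comp .fst) (Primrec.fst.comp .snd))
      (Primrec.option_some.comp (Primrec.snd.comp .snd))).and
      (hp.comp (Primrec.fst.comp .snd) (Primrec.snd.comp .snd)).not
  refine ⟨_, rePred_exists (rePred_of_primrecPred violated), fun X _ => ?_⟩
  simp only [Set.mem_ofPred_eq, not_forall, Prod.exists]
  constructor
  · rintro ⟨n, hn⟩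
    exact ⟨n + 1, n, X n, getElem?_seg_of_lt X n.lt_succ_self, hn⟩
  · rintro ⟨k, n, a, hXn, hn⟩
    rw [getElem?_seg] at hXn
    split_ifs at hXn
    exact ⟨n, by rwa [Option.some.inj hXn]⟩

theorem setOf_exists [Finite β] [Inhabited β] {C : Set (ℕ → α × β)} (hC : IsPi1Class C) :
    IsPi1Class {X | ∃ Y : ℕ → β, (fun n => (X n, Y n)) ∈ C} := by
  simpa only [IsPi1Class, Set.mem_ofPred_eq, not_exists] using IsSigma1.forall_sequence hC

theorem setOf_forall [Inhabited β] {C : Set (ℕ → α × β)} (hC : IsPi1Class C) :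
    IsPi1Class {X | ∀ Y : ℕ → β, (fun n => (X n, Y n)) ∈ C} := by
  simpa only [IsPi1Class, Set.mem_ofPred_eq, not_forall] using IsSigma1.exists_sequence hC

end IsPi1Class

theorem primrec_of_eventually_const {a : ℕ → α} {m : ℕ} (h : ∀ n ≥ m, a n = a m) : Primrec a := by
  let clip (n : ℕ) : Fin (m + 1) := ⟨min n m, by omega⟩
  have clip_primrec : Primrec clip := Primrec.fin_val_iff.1 (Primrec.nat_min.comp .id (.const m))
  have table : Primrec fun i : Fin (m + 1) => a i := .dom_finite _
  refine (table.comp clip_primrec).of_eq fun n => ?_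
  rcases le_total n m with hn | hn
  · simp [clip, hn]
  · simp [clip, hn, h n hn]

end SigmaOne

section DeltaTwo

variable {δ ε : Type} [Primcodable δ] [Primcodable ε]

/-- A predicate is `Σ⁰₂` if it is the projection of a co-r.e. relation. -/
def IsSigma2 (p : δ → Prop) : Prop :=
  ∃ R : δ × ℕ → Prop, REPred (fun x => ¬R x) ∧ ∀ d, p d ↔ ∃ a, R (d, a)

namespace IsSigma2

theorem of_exists {R : δ × ε → Prop} (hR : REPred fun x => ¬R x) :
    IsSigma2 fun d => ∃ e, R (d, e) := by
  refine ⟨fun x => ∃ e ∈ (decode (α := ε) x.2).toList, R (x.1, e), ?_, fun d => ?_⟩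
  · push Not
    exact rePred_comp (rePred_forall_mem_list hR)
      (.pair .fst (Primrec.optionToList.comp (Primrec.decode.comp .snd)))
  · exact ⟨fun ⟨e, h⟩ => ⟨encode e, e, by simp, h⟩, fun ⟨_, e, _, h⟩ => ⟨e, h⟩⟩

theorem of_rePred {p : δ → Prop} (hp : REPred p) : IsSigma2 p := by
  obtain ⟨c, hc⟩ := exists_code_of_rePred hp
  have halts : PrimrecPred fun x : δ × ℕ => (c.evaln x.2 (encode x.1)).isSome :=
    Primrec.eq.comp (Primrec.option_isSome.comp (Code.primrec_evaln.comp
      (.pair (.pair .snd (.const c)) (Primrec.encode.comp .fst)))) (.const true)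
  exact ⟨_, rePred_of_primrecPred halts.not, fun d => (hc d).trans dom_eval_iff_exists_evaln⟩

theorem of_rePred_not {p : δ → Prop} (hp : REPred fun d => ¬p d) : IsSigma2 p :=
  ⟨fun x => p x.1, rePred_comp hp .fst, fun _ => exists_const ℕ |>.symm⟩

theorem comp {p : ε → Prop} (hp : IsSigma2 p) {g : δ → ε} (hg : Primrec g) :
    IsSigma2 fun d => p (g d) := by
  obtain ⟨R, hR, hpR⟩ := hp
  exact ⟨fun x => R (g x.1, x.2), rePred_comp hR (.pair (hg.comp .fst) .snd), fun d => hpR _⟩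

theorem and {p q : δ → Prop} (hp : IsSigma2 p) (hq : IsSigma2 q) :
    IsSigma2 fun d => p d ∧ q d := by
  obtain ⟨R, hR, hpR⟩ := hp
  obtain ⟨S, hS, hqS⟩ := hq
  have refuted : REPred fun x : δ × ℕ × ℕ => ¬(R (x.1, x.2.1) ∧ S (x.1, x.2.2)) := by
    simp only [not_and_or]
    exact rePred_or (rePred_comp hR (.pair .fst (Primrec.fst.comp .snd)))
      (rePred_comp hS (.pair .fst (Primrec.snd.comp .snd)))
  simpa only [hpR, hqS, Prod.exists, exists_and_left, exists_and_right] using of_exists refuted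

theorem or {p q : δ → Prop} (hp : IsSigma2 p) (hq : IsSigma2 q) :
    IsSigma2 fun d => p d ∨ q d := by
  obtain ⟨R, hR, hpR⟩ := hp
  obtain ⟨S, hS, hqS⟩ := hq
  refine ⟨fun x => R x ∨ S x, ?_, fun d => by simp only [hpR, hqS, exists_or]⟩
  simpa only [not_or] using rePred_and hR hS

theorem exists_param {p : δ × ε → Prop} (hp : IsSigma2 p) : IsSigma2 fun d => ∃ e, p (d, e) := by
  obtain ⟨R, hR, hpR⟩ := hp
  simpa only [hpR, Prod.exists] using of_exists (R := fun x : δ × ε × ℕ => R ((x.1, x.2.1), x.2.2))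
    (rePred_comp hR (.pair (.pair .fst (Primrec.fst.comp .snd)) (Primrec.snd.comp .snd)))

theorem forall_mem_list {p : δ × ε → Prop} (hp : IsSigma2 p) :
    IsSigma2 fun x : δ × List ε => ∀ e ∈ x.2, p (x.1, e) := by
  obtain ⟨R, hR, hpR⟩ := hp
  have labelled : PrimrecPred fun y : (δ × List ε) × List (ε × ℕ) => y.2.map Prod.fst = y.1.2 :=
    Primrec.eq.comp (Primrec.list_map .snd (Primrec.fst.comp .snd).to₂) (Primrec.snd.comp .fst)
  have wrong_witness : REPred fun y : (δ × List ε) × List (ε × ℕ) =>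
      ∃ w, w ∈ y.2 ∧ ¬R ((y.1.1, w.1), w.2) :=
    rePred_exists (p := fun z : ((δ × List ε) × List (ε × ℕ)) × ε × ℕ =>
        z.2 ∈ z.1.2 ∧ ¬R ((z.1.1.1, z.2.1), z.2.2)) <|
      rePred_and (rePred_of_primrecPred (primrecRel_mem.comp .snd (Primrec.snd.comp .fst)))
        (rePred_comp hR (.pair (.pair (Primrec.fst.comp (Primrec.fst.comp .fst))
          (Primrec.fst.comp .snd)) (Primrec.snd.comp .snd)))
  have refuted : REPred fun y : (δ × List ε) × List (ε × ℕ) =>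
      ¬(y.2.map Prod.fst = y.1.2 ∧ ∀ w ∈ y.2, R ((y.1.1, w.1), w.2)) :=
    (rePred_or (rePred_of_primrecPred labelled.not) wrong_witness).of_eq fun y => by
      simp only [not_and_or, not_forall, exists_prop]
  convert of_exists refuted using 2 with x
  simp only [hpR]
  constructor
  · intro h
    choose! a ha using h
    exact ⟨x.2.map fun e => (e, a e), by simp [Function.comp_def], by simpa using ha⟩
  · rintro ⟨W, hW, h⟩ e he
    obtain ⟨w, hw, rfl⟩ := List.mem_map.1 (hW ▸ he)
    exact ⟨w.2, h w hw⟩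

end IsSigma2

/-- A predicate is `Δ⁰₂` if it and its negation are `Σ⁰₂`. -/
def IsDelta2 (p : δ → Prop) : Prop := IsSigma2 p ∧ IsSigma2 fun d => ¬p d

namespace IsDelta2

theorem of_rePred {p : δ → Prop} (hp : REPred p) : IsDelta2 p :=
  ⟨.of_rePred hp, .of_rePred_not (by simpa only [not_not] using hp)⟩

theorem comp {p : ε → Prop} (hp : IsDelta2 p) {g : δ → ε} (hg : Primrec g) :
    IsDelta2 fun d => p (g d) :=
  ⟨hp.1.comp hg, hp.2.comp hg⟩

theorem not {p : δ → Prop} (hp : IsDelta2 p) : IsDelta2 fun d => ¬p d :=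
  ⟨hp.2, by simpa only [not_not] using hp.1⟩

theorem and {p q : δ → Prop} (hp : IsDelta2 p) (hq : IsDelta2 q) : IsDelta2 fun d => p d ∧ q d :=
  ⟨hp.1.and hq.1, by simpa only [not_and_or] using hp.2.or hq.2⟩

theorem or {p q : δ → Prop} (hp : IsDelta2 p) (hq : IsDelta2 q) : IsDelta2 fun d => p d ∨ q d :=
  ⟨hp.1.or hq.1, by simpa only [not_or] using hp.2.and hq.2⟩

theorem comp_graph {p : δ × ε → Prop} (hp : IsDelta2 p) {f : δ → ε}
    (hf : IsSigma2 fun x : δ × ε => f x.1 = x.2) : IsDelta2 fun d => p (d, f d) := by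
  constructor
  · simpa using (hf.and hp.1).exists_param
  · simpa using (hf.and hp.2).exists_param

end IsDelta2

section DependentChoice

variable {σ : Type} [Primcodable σ]

/-- The step `s ↦ s'` at stage `n` takes the `Q`-successor of `s` that has the least code. -/
def LeastStep (Q : σ × ℕ × σ → Prop) (s : σ) (n : ℕ) (s' : σ) : Prop :=
  Q (s, n, s') ∧ ∀ t, encode t < encode s' → ¬Q (s, n, t)

theorem IsDelta2.leastStep {Q : σ × ℕ × σ → Prop} (hQ : IsDelta2 Q) :
    IsSigma2 fun x : σ × ℕ × σ => LeastStep Q x.1 x.2.1 x.2.2 := by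
  have candidates : Primrec fun x : σ × ℕ × σ =>
      (List.range (encode x.2.2)).filterMap (decode (α := σ)) :=
    Primrec.listFilterMap (Primrec.list_range.comp (Primrec.encode.comp (Primrec.snd.comp .snd)))
      (Primrec.decode.comp .snd)
  have not_earlier : PrimrecPred fun y : (σ × ℕ × σ) × σ => ¬encode y.2 < encode y.1.2.2 :=
    (Primrec.nat_lt.comp (Primrec.encode.comp .snd)
      (Primrec.encode.comp (Primrec.snd.comp (Primrec.snd.comp .fst)))).not
  have rejected := (IsSigma2.of_rePred (rePred_of_primrecPred not_earlier)).or
    (hQ.2.comp (.pair (Primrec.fst.comp .fst)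
      (.pair (Primrec.fst.comp (Primrec.snd.comp .fst)) .snd)))
  convert hQ.1.and (rejected.forall_mem_list.comp (.pair .id candidates)) using 2 with x
  refine and_congr_right fun _ => forall_congr' fun t => ?_
  simp only [not_lt, List.mem_filterMap, List.mem_range, id_eq]
  constructor
  · exact fun h _ => (lt_or_ge _ _).symm.imp_right h
  · exact fun h hlt => (h ⟨_, hlt, encodek t⟩).resolve_left hlt.not_ge

theorem exists_leastStep {Q : σ × ℕ × σ → Prop} {s : σ} {n : ℕ} (h : ∃ s', Q (s, n, s')) :
    ∃ s', LeastStep Q s n s' := by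
  obtain ⟨s', hs', least⟩ :=
    WellFounded.has_min (measure (encode (α := σ))).wf {s' | Q (s, n, s')} h
  exact ⟨s', hs', fun t ht hQ => least t hQ ht⟩

theorem LeastStep.unique {Q : σ × ℕ × σ → Prop} {s t t' : σ} {n : ℕ} (h : LeastStep Q s n t)
    (h' : LeastStep Q s n t') : t = t' :=
  encode_injective <| le_antisymm (not_lt.1 fun hlt => h.2 _ hlt h'.1)
    (not_lt.1 fun hlt => h'.2 _ hlt h.1)

theorem IsSigma2.step_at {step : σ → ℕ → σ → Prop}
    (hstep : IsSigma2 fun x : σ × ℕ × σ => step x.1 x.2.1 x.2.2) :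
    IsSigma2 fun y : List σ × ℕ =>
      ∃ u : σ × σ, (y.1[y.2]? = some u.1 ∧ y.1[y.2 + 1]? = some u.2) ∧ step u.1 y.2 u.2 := by
  have list : Primrec fun z : (List σ × ℕ) × σ × σ => z.1.1 := Primrec.fst.comp .fst
  have index : Primrec fun z : (List σ × ℕ) × σ × σ => z.1.2 := Primrec.snd.comp .fst
  have source : Primrec fun z : (List σ × ℕ) × σ × σ => z.2.1 := Primrec.fst.comp .snd
  have target : Primrec fun z : (List σ × ℕ) × σ × σ => z.2.2 := Primrec.snd.comp .snd
  have entries : PrimrecPred fun z : (List σ × ℕ) × σ × σ =>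
      z.1.1[z.1.2]? = some z.2.1 ∧ z.1.1[z.1.2 + 1]? = some z.2.2 :=
    (Primrec.eq.comp (Primrec.list_getElem?.comp list index) (Primrec.option_some.comp source)).and
      (Primrec.eq.comp (Primrec.list_getElem?.comp list (Primrec.succ.comp index))
        (Primrec.option_some.comp target))
  exact ((of_rePred (rePred_of_primrecPred entries)).and
    (hstep.comp (.pair source (.pair index target)))).exists_param

theorem IsSigma2.graph_of_step {step : σ → ℕ → σ → Prop}
    (hstep : IsSigma2 fun x : σ × ℕ × σ => step x.1 x.2.1 x.2.2)
    (unique : ∀ {s n t t'}, step s n t → step s n t' → t = t') {f : ℕ → σ}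
    (hf : ∀ n, step (f n) n (f (n + 1))) : IsSigma2 fun x : ℕ × σ => f x.1 = x.2 := by
  have ends : PrimrecPred fun y : (ℕ × σ) × List σ =>
      y.2[0]? = some (f 0) ∧ y.2[y.1.1]? = some y.1.2 :=
    (Primrec.eq.comp (Primrec.list_getElem?.comp .snd (.const 0)) (.const _)).and
      (Primrec.eq.comp (Primrec.list_getElem?.comp .snd (Primrec.fst.comp .fst))
        (Primrec.option_some.comp (Primrec.snd.comp .fst)))
  have history := ((of_rePred (rePred_of_primrecPred ends)).and (hstep.step_at.forall_mem_list.comp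
    (.pair .snd (Primrec.list_range.comp (Primrec.fst.comp .fst))))).exists_param
  convert history using 2 with x
  constructor
  · intro hx
    refine ⟨seg f (x.1 + 1), ⟨getElem?_seg_of_lt f x.1.succ_pos, ?_⟩, fun i hi => ?_⟩
    · rw [getElem?_seg_of_lt f x.1.lt_succ_self, hx]
    · have hi : i < x.1 := List.mem_range.1 hi
      exact ⟨(f i, f (i + 1)), ⟨getElem?_seg_of_lt f (by omega), getElem?_seg_of_lt f (by omega)⟩,
        hf i⟩
  · rintro ⟨l, ⟨h0, hx⟩, hl⟩
    have agrees (i : ℕ) (hi : i ≤ x.1) : l[i]? = some (f i) := by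
      induction i with
      | zero => exact h0
      | succ i ih =>
        obtain ⟨⟨s, t⟩, ⟨hs, ht⟩, hst⟩ := hl i (List.mem_range.2 hi)
        obtain rfl : f i = s := Option.some.inj ((ih (by omega)).symm.trans hs)
        exact ht.trans (congrArg some (unique hst (hf i)))
    exact Option.some.inj ((agrees x.1 le_rfl).symm.trans hx)

theorem IsDelta2.exists_sequence {Q : σ × ℕ × σ → Prop} (hQ : IsDelta2 Q) (I : σ → Prop) {s₀ : σ}
    (hs₀ : I s₀) (next : ∀ s n, I s → ∃ s', Q (s, n, s'))
    (preserves : ∀ s n s', I s → Q (s, n, s') → I s') :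
    ∃ f : ℕ → σ, (∀ n, I (f n) ∧ Q (f n, n, f (n + 1))) ∧
      IsSigma2 fun x : ℕ × σ => f x.1 = x.2 := by
  choose! g hg using fun s n (hs : I s) => exists_leastStep (next s n hs)
  let f (n : ℕ) : σ := n.rec s₀ fun n s => g s n
  have invariant (n : ℕ) : I (f n) := by
    induction n with
    | zero => exact hs₀
    | succ n ih => exact preserves _ n _ ih (hg _ n ih).1
  have step (n : ℕ) : LeastStep Q (f n) n (f (n + 1)) := hg _ n (invariant n)
  exact ⟨f, fun n => ⟨invariant n, (step n).1⟩, hQ.leastStep.graph_of_step LeastStep.unique step⟩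

end DependentChoice

end DeltaTwo

section Low

variable {α β γ δ : Type} [Primcodable α] [Primcodable β] [Primcodable γ] [Primcodable δ]

/-- A sequence is low if every relation that is `Σ⁰₁` in it is `Δ⁰₂`. -/
def Low (O : ℕ → γ) : Prop :=
  ∀ ⦃δ : Type⦄ [Primcodable δ] ⦃P : (ℕ → γ) → δ → Prop⦄, IsSigma1 P → IsDelta2 (P O)

theorem IsUniversalSigma1.low {K : (ℕ → γ) → ℕ → Prop} (hK : IsUniversalSigma1 K) {O : ℕ → γ}
    (hO : IsDelta2 (K O)) : Low O := by
  intro δ _ P hP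
  obtain ⟨g, hg, hPK⟩ := hK.2 hP
  rw [show P O = _ from funext fun d => propext (hPK O d)]
  exact hO.comp hg

theorem low_of_primrec {O : ℕ → γ} (hO : Primrec O) : Low O := by
  rintro δ _ P ⟨R, hR, hPR⟩
  have seg_primrec : Primrec (seg O) :=
    (Primrec.list_map Primrec.list_range (hO.comp .snd).to₂).of_eq fun k =>
      (seg_eq_map_range O k).symm
  rw [show P O = _ from funext fun d => propext (hPR O d)]
  exact .of_rePred (rePred_exists (rePred_comp hR (.pair (seg_primrec.comp .snd) .fst)))

theorem Low.comap {O : ℕ → γ} (hO : Low O) {φ : ℕ → γ → β} (hφ : Primrec₂ φ) {v : ℕ → ℕ}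
    (hv : Primrec v) (v_le : ∀ m, v m ≤ m) : Low fun m => φ m (O (v m)) :=
  fun _ _ _ hP => hO (hP.comap hφ hv v_le)

/-- `f` is uniformly computable from `O`, each value from the value of `O` at the same place. -/
def ReducesTo (f : ℕ → β) (O : ℕ → γ) : Prop :=
  ∃ φ : ℕ → γ → β, Primrec₂ φ ∧ ∀ n, f n = φ n (O n)

namespace ReducesTo

theorem refl (O : ℕ → γ) : ReducesTo O O := ⟨fun _ x => x, .snd, fun _ => rfl⟩

theorem fst {f : ℕ → α} {O : ℕ → γ} : ReducesTo f fun n => (f n, O n) :=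
  ⟨fun _ x => x.1, Primrec.fst.comp .snd, fun _ => rfl⟩

theorem snd {f : ℕ → α} {O : ℕ → γ} : ReducesTo O fun n => (f n, O n) :=
  ⟨fun _ x => x.2, Primrec.snd.comp .snd, fun _ => rfl⟩

theorem trans {f : ℕ → α} {g : ℕ → β} {O : ℕ → γ} (hfg : ReducesTo f g) (hg : ReducesTo g O) :
    ReducesTo f O := by
  obtain ⟨φ, hφ, hf⟩ := hfg
  obtain ⟨ψ, hψ, hg⟩ := hg
  exact ⟨fun n x => φ n (ψ n x), hφ.comp .fst hψ, fun n => by rw [hf, hg]⟩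

theorem prodMk {f : ℕ → α} {g : ℕ → β} {O : ℕ → γ} (hf : ReducesTo f O) (hg : ReducesTo g O) :
    ReducesTo (fun n => (f n, g n)) O := by
  obtain ⟨φ, hφ, hf⟩ := hf
  obtain ⟨ψ, hψ, hg⟩ := hg
  exact ⟨fun n x => (φ n x, ψ n x), Primrec.pair hφ hψ, fun n => by simp only [hf, hg]⟩

theorem low {f : ℕ → β} {O : ℕ → γ} (hf : ReducesTo f O) (hO : Low O) : Low f := by
  obtain ⟨φ, hφ, hf⟩ := hf
  rw [funext hf]
  exact hO.comap hφ .id fun _ => le_rfl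

end ReducesTo

theorem IsSigma1.exists_forall_of_monotone [Finite β] {P : (ℕ → α × β) → δ → Prop}
    (hP : IsSigma1 P) {X : ℕ → α} {d : ℕ → δ}
    (mono : ∀ Y : ℕ → β, Monotone fun m => P (fun n => (X n, Y n)) (d m))
    (h : ∀ Y : ℕ → β, ∃ m, P (fun n => (X n, Y n)) (d m)) :
    ∃ m, ∀ Y : ℕ → β, P (fun n => (X n, Y n)) (d m) := by
  obtain ⟨F, -, sound, complete⟩ := hP.exists_forces
  obtain ⟨M, hM⟩ := fan_theorem (p := fun w => ∃ m ≤ w.length, F X (w, d m)) fun Y => by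
    obtain ⟨m, hm⟩ := h Y
    obtain ⟨k, hk, hmk⟩ := ((complete X Y _ hm).and (eventually_ge_atTop m)).exists
    exact ⟨k, m, by simpa using hmk, hk⟩
  refine ⟨M, fun Y => ?_⟩
  obtain ⟨k, hk, m, hm, hF⟩ := hM Y
  have := sound X _ _ hF Y
  rw [overwrite_seg_self] at this
  exact mono Y ((hm.trans_eq (length_seg Y k)).trans hk) this

/-- The lists built by the forcing of the low basis theorem: the elements of `L n` are `Σ⁰₁` facts
about the future member of the class that have been made false. -/
theorem exists_maximal_lists {Empty : List ℕ → Prop} (hEmpty : IsDelta2 Empty)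
    (nonempty : ¬Empty []) :
    ∃ L : ℕ → List ℕ, (∀ n, ¬Empty (L n)) ∧ (∀ n, L n ⊆ L (n + 1)) ∧
      (∀ n, n ∉ L (n + 1) → Empty (n :: L n)) ∧ IsDelta2 fun n => n ∉ L (n + 1) := by
  have isCons : PrimrecPred fun x : List ℕ × ℕ × List ℕ => x.2.2 = x.2.1 :: x.1 :=
    Primrec.eq.comp (Primrec.snd.comp .snd) (Primrec.list_cons.comp (Primrec.fst.comp .snd) .fst)
  have isSame : PrimrecPred fun x : List ℕ × ℕ × List ℕ => x.2.2 = x.1 :=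
    Primrec.eq.comp (Primrec.snd.comp .snd) .fst
  have hCons : IsDelta2 fun x : List ℕ × ℕ × List ℕ => Empty (x.2.1 :: x.1) :=
    hEmpty.comp (Primrec.list_cons.comp (Primrec.fst.comp .snd) .fst)
  have hQ := (hCons.not.and (.of_rePred (rePred_of_primrecPred isCons))).or
    (hCons.and (.of_rePred (rePred_of_primrecPred isSame)))
  obtain ⟨L, hL, graph⟩ := hQ.exists_sequence (fun L => ¬Empty L) nonempty
    (fun L n _ => by by_cases h : Empty (n :: L) <;> simp [h])
    (fun L n L' hL h => by rcases h with ⟨h, h'⟩ | ⟨-, h'⟩ <;> simp_all)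
  refine ⟨L, fun n => (hL n).1, fun n => ?_, fun n hn => ?_, ?_⟩
  · rcases (hL n).2 with ⟨-, h⟩ | ⟨-, h⟩ <;> simp_all
  · rcases (hL n).2 with ⟨-, h⟩ | ⟨h, -⟩
    · simp_all
    · exact h
  · have notMem : PrimrecPred fun x : ℕ × List ℕ => x.1 ∉ x.2 := primrecRel_mem.not
    exact (IsDelta2.of_rePred (rePred_of_primrecPred notMem)).comp_graph
      (f := fun n => L (n + 1)) (graph.comp (.pair (Primrec.succ.comp .fst) .snd))

/-- The low basis theorem of Jockusch and Soare, relative to a low oracle. -/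
theorem exists_low_of_isPi1Class [Finite β] [Inhabited β] {C : Set (ℕ → γ × β)} (hC : IsPi1Class C)
    {O : ℕ → γ} (hO : Low O) (nonempty : ∃ Y : ℕ → β, (fun n => (O n, Y n)) ∈ C) :
    ∃ Y : ℕ → β, (fun n => (O n, Y n)) ∈ C ∧ Low fun n => (O n, Y n) := by
  obtain ⟨K, hK⟩ := exists_isUniversalSigma1 (γ × β)
  let Excluded (Z : ℕ → γ × β) (L : List ℕ) : Prop := Z ∉ C ∨ ∃ n, n ∈ L ∧ K Z n
  have hExcluded : IsSigma1 Excluded := by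
    have member : PrimrecPred fun x : List ℕ × ℕ => x.2 ∈ x.1 := primrecRel_mem.comp .snd .fst
    exact (hC.comp (.const ())).or <| .exists_param <|
      (IsSigma1.of_rePred (rePred_of_primrecPred member)).and (hK.1.comp .snd)
  obtain ⟨L, hL, L_mono, maximal, delta⟩ := exists_maximal_lists (hO hExcluded.forall_sequence)
    fun h => let ⟨Y, hY⟩ := nonempty; by simpa [Excluded, hY] using h Y
  have excluded_mono (Y : ℕ → β) : Monotone fun m => Excluded (fun n => (O n, Y n)) (L m) :=
    monotone_nat_of_le_succ fun m => Or.imp_right fun ⟨n, hn, hKn⟩ => ⟨n, L_mono m hn, hKn⟩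
  obtain ⟨Y, hY⟩ : ∃ Y : ℕ → β, ∀ m, ¬Excluded (fun n => (O n, Y n)) (L m) := by
    by_contra! h
    obtain ⟨m, hm⟩ := hExcluded.exists_forall_of_monotone excluded_mono h
    exact hL m hm
  have K_iff : K (fun n => (O n, Y n)) = fun n => n ∉ L (n + 1) := by
    funext n
    refine propext ⟨fun hK hn => hY (n + 1) (.inr ⟨n, hn, hK⟩), fun hn => ?_⟩
    rcases maximal n hn Y with h | ⟨m, hm, hKm⟩
    · exact absurd (.inl h) (hY n)
    · rcases List.mem_cons.1 hm with rfl | hm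
      · exact hKm
      · exact absurd (.inr ⟨m, hm, hKm⟩) (hY n)
  exact ⟨Y, by simpa [Excluded] using fun h => hY 0 (.inl h), hK.low (K_iff ▸ delta)⟩

/-- `H` is generic over `O`: every `Π⁰₁` class relative to `O` that contains `H` contains all the
sequences that agree with `H` up to some place. -/
def IsGenericOver (O : ℕ → γ) (H : ℕ → α) : Prop :=
  ∀ C : Set (ℕ → γ × α), IsPi1Class C → (fun n => (O n, H n)) ∈ C →
    ∃ k, ∀ H' : ℕ → α, (fun n => (O n, overwrite (seg H k) H' n)) ∈ C

theorem IsGenericOver.of_reducesTo {f : ℕ → β} {O : ℕ → γ} {H : ℕ → α} (hH : IsGenericOver O H)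
    (hf : ReducesTo f O) : IsGenericOver f H := by
  obtain ⟨φ, hφ, hf⟩ := hf
  obtain rfl : f = fun n => φ n (O n) := funext hf
  intro C hC hmem
  exact hH {X | (fun n => (φ n (X n).1, (X n).2)) ∈ C} (hC.preimage
    (φ := fun n (x : γ × α) => (φ n x.1, x.2))
    (Primrec.pair (hφ.comp .fst (Primrec.fst.comp .snd)) (Primrec.snd.comp .snd))) hmem

/-- The finite extension method: `H` decides the `n`-th fact between its `b n`-th and its `e n`-th
value. -/
theorem exists_deciding_sequence [Inhabited α] {F : List α × ℕ → Prop} (hF : IsDelta2 F)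
    (hF_extends : IsDelta2 fun x : List α × ℕ => ∃ u, F (x.1 ++ u, x.2)) :
    ∃ (H : ℕ → α) (b e : ℕ → ℕ),
      (∀ n, F (seg H (e n), n) ∨ ¬∃ u, F (seg H (b n) ++ u, n)) ∧
      IsDelta2 fun n => F (seg H (e n), n) := by
  have isExtension : PrimrecPred fun x : List α × ℕ × List α => x.1 ++ [default] <+: x.2.2 := by
    have pad : Primrec fun x : List α × ℕ × List α => x.1 ++ [default] :=
      Primrec.list_append.comp .fst (.const [default])
    simpa only [List.prefix_iff_eq_take] using Primrec.eq.comp pad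
      (Primrec.list_take.comp (Primrec.list_length.comp pad) (Primrec.snd.comp .snd))
  have hQ := (IsDelta2.of_rePred (rePred_of_primrecPred isExtension)).and
    ((hF.comp (.pair (Primrec.snd.comp .snd) (Primrec.fst.comp .snd))).or
      (hF_extends.comp (.pair (Primrec.list_append.comp .fst (.const [default]))
        (Primrec.fst.comp .snd))).not)
  obtain ⟨s, hs, graph⟩ := hQ.exists_sequence (fun _ => True) (s₀ := []) trivial
    (fun s n _ => by
      by_cases h : ∃ u, F (s ++ [default] ++ u, n)
      · obtain ⟨u, hu⟩ := h
        exact ⟨_, List.prefix_append _ u, .inl hu⟩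
      · exact ⟨s ++ [default], List.prefix_rfl, .inr h⟩)
    fun _ _ _ _ _ => trivial
  have prefixes (n : ℕ) : s n ++ [default] <+: s (n + 1) := (hs n).2.1
  obtain ⟨H, hH⟩ := exists_seg_eq_of_prefixes prefixes
  have seg_pad (n : ℕ) : seg H (s n ++ [default]).length = s n ++ [default] := by
    have h := List.prefix_iff_eq_take.1 (prefixes n)
    rw [← hH (n + 1), take_seg, min_eq_left (prefixes n).length_le] at h
    exact h.symm
  refine ⟨H, fun n => (s n ++ [default]).length, fun n => (s (n + 1)).length, fun n => ?_, ?_⟩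
  · rw [hH, seg_pad]
    exact (hs n).2.2
  · simp only [hH]
    exact (hF.comp (.pair .snd .fst)).comp_graph (f := fun n => s (n + 1))
      (graph.comp (.pair (Primrec.succ.comp .fst) .snd))

theorem exists_isGenericOver_low (α : Type) [Primcodable α] [Inhabited α] {O : ℕ → γ}
    (hO : Low O) : ∃ H : ℕ → α, IsGenericOver O H ∧ Low fun n => (O n, H n) := by
  obtain ⟨K, hK⟩ := exists_isUniversalSigma1 (γ × α)
  obtain ⟨F, hF, sound, complete⟩ := hK.1.exists_forces
  obtain ⟨H, b, e, decides, delta⟩ := exists_deciding_sequence (hO hF) (hO (.exists_param (hF.comp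
    (.pair (Primrec.list_append.comp (Primrec.fst.comp .fst) .snd) (Primrec.snd.comp .fst)))))
  have extends_of_K {n : ℕ} {Y : ℕ → α} (hY : seg Y (b n) = seg H (b n))
      (hKY : K (fun m => (O m, Y m)) n) : ∃ u, F O (seg H (b n) ++ u, n) := by
    obtain ⟨k, hk, hbk⟩ := ((complete O Y n hKY).and (eventually_ge_atTop (b n))).exists
    refine ⟨(seg Y k).drop (b n), ?_⟩
    rwa [← hY, ← min_eq_left hbk, ← take_seg, min_eq_left hbk, List.take_append_drop]
  have F_of_K {n : ℕ} (h : K (fun m => (O m, H m)) n) : F O (seg H (e n), n) :=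
    (decides n).resolve_right (not_not_intro (extends_of_K rfl h))
  have K_iff : K (fun m => (O m, H m)) = fun n => F O (seg H (e n), n) := by
    funext n
    refine propext ⟨F_of_K, fun h => ?_⟩
    simpa only [overwrite_seg_self] using sound O _ n h H
  refine ⟨H, fun C hC hmem => ?_, hK.low (K_iff ▸ delta)⟩
  obtain ⟨g, -, hg⟩ := hK.2 hC
  refine ⟨b (g ()), fun H' => ?_⟩
  by_contra hH'
  have seg_H' : seg (overwrite (seg H (b (g ()))) H') (b (g ())) = seg H (b (g ())) := by
    simpa only [length_seg] using seg_overwrite (seg H (b (g ()))) H'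
  have decided : F O (seg H (e (g ())), g ()) :=
    (decides (g ())).resolve_right (not_not_intro (extends_of_K seg_H' ((hg _ ()).1 hH')))
  exact (hg _ ()).2 (K_iff ▸ decided) hmem

end Low

section CrossConstraint

variable {r : ℕ} {γ : Type} [Primcodable γ]

/-- If `a` has already made a nonzero choice at a place, then a later stage plays `0` there. -/
def switch (a h : Fin 3) : Fin 3 := if a = 0 then h else 0

/-- The first nonzero choice among `a` and `h`. -/
def merge (a h : Fin 3) : Fin 3 := if a = 0 then h else a

/-- A letter distinct from `0` and from `a`. -/
def avoid (a : Fin 3) : Fin 3 := if a = 2 then 1 else 2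

theorem primrec₂_getD {α : Type} [Primcodable α] (ρ : List α) : Primrec₂ fun n a => ρ.getD n a :=
  (Primrec.option_getD.comp (Primrec.list_getElem?.comp (.const ρ) .fst) .snd).of_eq fun _ =>
    List.getD_eq_getElem?_getD.symm

theorem ReducesTo.map₂ {α β δ : Type} [Primcodable α] [Primcodable β] [Primcodable δ] [Finite α]
    [Finite β] {f : ℕ → α} {g : ℕ → β} {O : ℕ → γ} (op : α → β → δ) (hf : ReducesTo f O)
    (hg : ReducesTo g O) : ReducesTo (fun n => op (f n) (g n)) O :=
  have op_primrec : Primrec fun x : α × β => op x.1 x.2 := .dom_finite _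
  .trans ⟨fun _ (x : α × β) => op x.1 x.2, op_primrec.comp .snd, fun _ => rfl⟩ (hf.prodMk hg)

theorem ReducesTo.overwrite {α : Type} [Primcodable α] {X : ℕ → α} {O : ℕ → γ} (ρ : List α)
    (hX : ReducesTo X O) : ReducesTo (overwrite ρ X) O :=
  .trans ⟨fun n x => ρ.getD n x, primrec₂_getD ρ, fun _ => rfl⟩ hX

/-- `(X, Y)` belongs to `P`, and from place `m` on the components of `Y` with index in `L` are those
of `Z`. -/
def IsCompanion (P : Set (ℕ → Fin 3 × (Fin r → Fin 2))) (L : Finset (Fin r)) (m : ℕ)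
    (Z : ℕ → Fin r → Fin 2) (X : ℕ → Fin 3) (Y : ℕ → Fin r → Fin 2) : Prop :=
  (fun n => (X n, Y n)) ∈ P ∧ ∀ n ≥ m, ∀ s ∈ L, Y n s = Z n s

/-- Every `X` extending `ρ` has a companion in `P` that agrees with `Z` past `ρ` on the components
in `L`: the stem `ρ` locks these components. -/
def Locks (P : Set (ℕ → Fin 3 × (Fin r → Fin 2))) (L : Finset (Fin r)) (ρ : List (Fin 3))
    (Z : ℕ → Fin r → Fin 2) : Prop :=
  ∀ X, ∃ Y, IsCompanion P L ρ.length Z (overwrite ρ X) Y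

/-- Every `Π⁰₁` class containing `a` has a member that is eventually `0`. -/
def Approximable (a : ℕ → Fin 3) : Prop :=
  ∀ C, IsPi1Class C → a ∈ C → ∃ a' ∈ C, ∀ᶠ n in atTop, a' n = 0

variable {P : Set (ℕ → Fin 3 × (Fin r → Fin 2))} {L : Finset (Fin r)} {ρ : List (Fin 3)}
  {Z : ℕ → Fin r → Fin 2}

theorem isPi1Class_isCompanion (hP : IsPi1Class P) (L : Finset (Fin r)) (m : ℕ)
    {z : ℕ → γ → Fin r → Fin 2} {x : ℕ → γ → Fin 3} {y : ℕ → γ → Fin r → Fin 2} (hz : Primrec₂ z)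
    (hx : Primrec₂ x) (hy : Primrec₂ y) :
    IsPi1Class {V : ℕ → γ | IsCompanion P L m (fun n => z n (V n)) (fun n => x n (V n))
      fun n => y n (V n)} := by
  have agree_finite : PrimrecPred fun p : (Fin r → Fin 2) × (Fin r → Fin 2) =>
      ∀ s ∈ L, p.1 s = p.2 s := ⟨inferInstance, Primrec.dom_finite _⟩
  have agree : PrimrecRel fun n c => n ≥ m → ∀ s ∈ L, y n c s = z n c s :=
    ((Primrec.nat_le.comp (.const m) .fst).not.or (agree_finite.comp (.pair hy hz))).of_eq
      fun _ => imp_iff_not_or.symm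
  exact (hP.preimage (φ := fun n c => (x n c, y n c)) (Primrec.pair hx hy)).inter
    (.setOf_forall_apply agree)

theorem Locks.exists_companion (hP : IsPi1Class P) (h : Locks P L ρ Z) {O : ℕ → γ} (hO : Low O)
    (hZ : ReducesTo Z O) {X : ℕ → Fin 3} (hX : ReducesTo X O) :
    ∃ Y, IsCompanion P L ρ.length Z (overwrite ρ X) Y ∧ Low fun n => (O n, Y n) := by
  obtain ⟨z, hz, hZ⟩ := hZ
  obtain ⟨x, hx, hX⟩ := hX.overwrite ρ
  have nonempty := h X
  rw [funext hZ, funext hX] at nonempty ⊢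
  have isPi1Class := isPi1Class_isCompanion hP L ρ.length (γ := γ × (Fin r → Fin 2))
    (z := fun n V => z n V.1) (x := fun n V => x n V.1) (y := fun _ V => V.2)
    (hz.comp .fst (Primrec.fst.comp .snd)) (hx.comp .fst (Primrec.fst.comp .snd))
    (Primrec.snd.comp .snd)
  exact exists_low_of_isPi1Class isPi1Class hO nonempty

theorem approximable_zero : Approximable fun _ => 0 :=
  fun _ _ h => ⟨_, h, .of_forall fun _ => rfl⟩

theorem Approximable.merge_generic {a H : ℕ → Fin 3} (ha : Approximable a)
    (hH : IsGenericOver a H) : Approximable fun n => merge (a n) (H n) := by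
  intro C hC hmem
  have merge_primrec : Primrec₂ merge := Primrec.dom_finite _
  obtain ⟨k, hk⟩ := hH {V | (fun n => merge (V n).1 (V n).2) ∈ C}
    (hC.preimage (φ := fun _ (x : Fin 3 × Fin 3) => merge x.1 x.2)
      (merge_primrec.comp (Primrec.fst.comp .snd) (Primrec.snd.comp .snd))) hmem
  obtain ⟨a', ha', zero⟩ := ha {b | (fun n => merge (b n) (overwrite (seg H k) 0 n)) ∈ C}
    (hC.preimage (φ := fun n x => merge x ((seg H k).getD n 0))
      (merge_primrec.comp .snd ((primrec₂_getD _).comp .fst (.const 0)))) (hk 0)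
  refine ⟨_, ha', ?_⟩
  filter_upwards [zero, eventually_ge_atTop k] with n hn hkn
  rw [hn, overwrite_of_length_le _ ((length_seg H k).trans_le hkn)]
  rfl

theorem overwrite_seg_switch {a : ℕ → Fin 3} {θ : List (Fin 3)} {k : ℕ} (hρ : ρ.length ≤ k)
    (hθ : θ.length ≤ k) (ha : ∀ n ≥ k, a n = 0) (X : ℕ → Fin 3) :
    overwrite (seg (overwrite ρ fun n => switch (a n) (overwrite θ 0 n)) k) X =
      overwrite ρ fun n => switch (a n) (overwrite θ (overwrite (List.replicate k 0) X) n) := by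
  funext n
  rcases lt_or_ge n k with hn | hn
  · rw [overwrite_seg_of_lt _ _ hn]
    simp [overwrite, hn]
  · rw [overwrite_of_length_le _ (by simpa using hn), overwrite_of_length_le _ (hρ.trans hn),
      ha n hn, overwrite_of_length_le _ (hθ.trans hn), overwrite_of_length_le _ (by simpa using hn)]
    rfl

theorem low_of_eventually_zero {a : ℕ → Fin 3} (ha : ∀ᶠ n in atTop, a n = 0) : Low a := by
  obtain ⟨m, hm⟩ := eventually_atTop.1 ha
  exact low_of_primrec (primrec_of_eventually_const fun n hn => by rw [hm n hn, hm m le_rfl])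

/-- Genericity of `H` makes all extensions of a stem have companions, which is a `Π⁰₁` property of
`a`; replacing `a` by an approximation that is eventually `0`, these extensions become arbitrary. -/
theorem exists_locks_of_generic (hP : IsPi1Class P) {m : ℕ} {a H : ℕ → Fin 3}
    {Y : ℕ → Fin r → Fin 2} (ha : Approximable a) (hH : IsGenericOver (fun n => (a n, Z n)) H)
    (hY : IsCompanion P L m Z (overwrite ρ fun n => switch (a n) (H n)) Y) :
    ∃ τ Z', Low Z' ∧ Locks P L τ Z' := by
  let Good : Set (ℕ → (Fin 3 × (Fin r → Fin 2)) × Fin 3) := {V | ∃ Y, IsCompanion P L m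
    (fun n => (V n).1.2) (overwrite ρ fun n => switch (V n).1.1 (V n).2) Y}
  have switch_primrec : Primrec₂ switch := Primrec.dom_finite _
  have good_isPi1Class : IsPi1Class Good := by
    refine .setOf_exists (isPi1Class_isCompanion hP L m
      (γ := ((Fin 3 × (Fin r → Fin 2)) × Fin 3) × (Fin r → Fin 2)) (z := fun _ V => V.1.1.2)
      (x := fun n V => ρ.getD n (switch V.1.1.1 V.1.2)) (y := fun _ V => V.2) ?_ ?_ ?_)
    · exact Primrec.snd.comp (Primrec.fst.comp (Primrec.fst.comp .snd))
    · exact (primrec₂_getD ρ).comp .fst (switch_primrec.comp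
        (Primrec.fst.comp (Primrec.fst.comp (Primrec.fst.comp .snd)))
        (Primrec.snd.comp (Primrec.fst.comp .snd)))
    · exact Primrec.snd.comp .snd
  obtain ⟨k, hk⟩ := hH Good good_isPi1Class ⟨Y, hY⟩
  let AllGood : Set (ℕ → Fin 3 × (Fin r → Fin 2)) :=
    {U | ∀ h : ℕ → Fin 3, (fun n => (U n, overwrite (seg H k) h n)) ∈ Good}
  have allGood_isPi1Class : IsPi1Class AllGood :=
    .setOf_forall (good_isPi1Class.preimage (φ := fun n (x : (Fin 3 × (Fin r → Fin 2)) × Fin 3) =>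
      (x.1, (seg H k).getD n x.2)) (Primrec.pair (Primrec.fst.comp .snd)
        ((primrec₂_getD _).comp .fst (Primrec.snd.comp .snd))))
  obtain ⟨a', nonempty, zero⟩ := ha _ allGood_isPi1Class.setOf_exists ⟨Z, hk⟩
  obtain ⟨Z', allGood, hZ'⟩ := exists_low_of_isPi1Class allGood_isPi1Class
    (low_of_eventually_zero zero) nonempty
  obtain ⟨K, hK⟩ := eventually_atTop.1 (zero.and ((eventually_ge_atTop m).and
    ((eventually_ge_atTop k).and (eventually_ge_atTop ρ.length))))
  obtain ⟨-, hmK, hkK, hρK⟩ := hK K le_rfl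
  refine ⟨seg (overwrite ρ fun n => switch (a' n) (overwrite (seg H k) 0 n)) K, Z',
    ReducesTo.low (.snd (f := a')) hZ', fun X => ?_⟩
  obtain ⟨Y', hmem, agree⟩ := allGood (overwrite (List.replicate K 0) X)
  rw [overwrite_seg_switch hρK ((length_seg H k).trans_le hkK) (fun n hn => (hK n hn).1),
    length_seg]
  exact ⟨Y', hmem, fun n hn => agree n (hmK.trans hn)⟩

/-- A stage of the construction over a lock `Z`: a low oracle `O` with values in `γ`, computing `Z`
and the record `a` of the nonzero choices made so far. -/
structure Stage (Z : ℕ → Fin r → Fin 2) where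
  γ : Type
  [primcodable : Primcodable γ]
  O : ℕ → γ
  a : ℕ → Fin 3
  low : Low O
  lock_le : ReducesTo Z O
  a_le : ReducesTo a O
  approximable : Approximable a

attribute [instance] Stage.primcodable

/-- The stage `S'` is obtained from `S` by choosing `H` generically and then a companion `Y`. -/
structure Stage.IsNext (P : Set (ℕ → Fin 3 × (Fin r → Fin 2))) (L : Finset (Fin r))
    (ρ : List (Fin 3)) (S S' : Stage Z) (H : ℕ → Fin 3) (Y : ℕ → Fin r → Fin 2) : Prop where
  generic : IsGenericOver S.O H
  oracle_le : ReducesTo S.O S'.O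
  generic_le : ReducesTo H S'.O
  companion_le : ReducesTo Y S'.O
  companion : IsCompanion P L ρ.length Z (overwrite ρ fun n => switch (S.a n) (H n)) Y
  a_eq : S'.a = fun n => merge (S.a n) (H n)

theorem Stage.exists_isNext (hP : IsPi1Class P) (h : Locks P L ρ Z) (S : Stage Z) :
    ∃ S' H Y, Stage.IsNext P L ρ S S' H Y := by
  obtain ⟨H, generic, low⟩ := exists_isGenericOver_low (Fin 3) S.low
  have oracle_le : ReducesTo S.O fun n => (S.O n, H n) := .fst
  obtain ⟨Y, companion, low⟩ := h.exists_companion hP low (S.lock_le.trans oracle_le)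
    (.map₂ switch (S.a_le.trans oracle_le) .snd)
  have oracle_le : ReducesTo S.O fun n => ((S.O n, H n), Y n) := oracle_le.trans .fst
  have generic_le : ReducesTo H fun n => ((S.O n, H n), Y n) := .trans .snd .fst
  exact ⟨⟨_, _, fun n => merge (S.a n) (H n), low, S.lock_le.trans oracle_le,
    .map₂ merge (S.a_le.trans oracle_le) generic_le,
    S.approximable.merge_generic (generic.of_reducesTo S.a_le)⟩,
    H, Y, generic, oracle_le, generic_le, .snd, companion, rfl⟩

theorem exists_chain (hP : IsPi1Class P) (hZ : Low Z) (h : Locks P L ρ Z) :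
    ∃ (S : ℕ → Stage Z) (H : ℕ → ℕ → Fin 3) (Y : ℕ → ℕ → Fin r → Fin 2),
      ∀ i, Stage.IsNext P L ρ (S i) (S (i + 1)) (H i) (Y i) := by
  choose next H Y hnext using Stage.exists_isNext (Z := Z) hP h
  let start : Stage Z := ⟨_, Z, fun _ => 0, hZ, .refl Z,
    ⟨fun _ _ => 0, .const 0, fun _ => rfl⟩, approximable_zero⟩
  let S (i : ℕ) : Stage Z := next^[i] start
  refine ⟨S, fun i => H (S i), fun i => Y (S i), fun i => ?_⟩
  simp only [S, Function.iterate_succ_apply']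
  exact hnext _

section Chain

variable {S : ℕ → Stage Z} {H : ℕ → ℕ → Fin 3} {Y : ℕ → ℕ → Fin r → Fin 2}
  (hS : ∀ i, Stage.IsNext P L ρ (S i) (S (i + 1)) (H i) (Y i))
include hS

theorem chain_oracle_le {i j : ℕ} (hij : i ≤ j) : ReducesTo (S i).O (S j).O := by
  induction j, hij using Nat.le_induction with
  | base => exact .refl _
  | succ j _ ih => exact ih.trans (hS j).oracle_le

theorem chain_a_eq_of_ne_zero {i j n : ℕ} (hij : i ≤ j) (h : (S i).a n ≠ 0) :
    (S j).a n = (S i).a n := by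
  induction j, hij using Nat.le_induction with
  | base => rfl
  | succ j _ ih => simp only [(hS j).a_eq, merge, ih, if_neg h]

theorem chain_switch_ne_avoid {i j : ℕ} (hij : i < j) (n : ℕ) :
    switch ((S i).a n) (H i n) ≠ avoid ((S j).a n) := by
  have switch_eq (a h : Fin 3) : switch a h = 0 ∨ switch a h ≠ 0 ∧ switch a h = merge a h := by
    decide +revert
  have avoid_ne (a : Fin 3) : avoid a ≠ 0 ∧ avoid a ≠ a := by decide +revert
  rcases switch_eq ((S i).a n) (H i n) with h | ⟨hne, h⟩
  · exact h ▸ (avoid_ne _).1.symm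
  · have next_a : (S (i + 1)).a n = switch ((S i).a n) (H i n) := by rw [(hS i).a_eq, h]
    rw [← next_a, ← chain_a_eq_of_ne_zero hS (Nat.succ_le_of_lt hij) (next_a ▸ hne)]
    exact (avoid_ne _).2.symm

theorem exists_locks_insert (hP : IsPi1Class P) {i j : ℕ} (hij : i < j) {s : Fin r}
    (agree : ∀ᶠ n in atTop, Y j n s = Y i n s) :
    ∃ τ Z', Low Z' ∧ Locks P (insert s L) τ Z' := by
  obtain ⟨m, hm⟩ := eventually_atTop.1 agree
  have lock_le : ReducesTo (fun n => Function.update (Z n) s (Y i n s)) (S j).O :=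
    .map₂ (fun z y => Function.update z s (y s)) (S j).lock_le
      ((hS i).companion_le.trans (chain_oracle_le hS hij))
  refine exists_locks_of_generic hP (m := max m ρ.length) (S j).approximable
    ((hS j).generic.of_reducesTo ((S j).a_le.prodMk lock_le))
    ⟨(hS j).companion.1, fun n hn t ht => ?_⟩
  rcases eq_or_ne t s with rfl | hts
  · simpa only [Function.update_self] using hm n (le_of_max_le_left hn)
  · simp only [Function.update_of_ne hts]
    exact (hS j).companion.2 n (le_of_max_le_right hn) t (Finset.mem_of_mem_insert_of_ne ht hts)

/-- If each `Y i` with `i ≤ r` eventually differed from `Y'` in some component, two of them would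
differ from `Y'`, hence eventually agree, in the same component, which could then be locked. -/
theorem chain_exists_frequently_eq (hP : IsPi1Class P)
    (maximal : ∀ s ∉ L, ¬∃ τ Z', Low Z' ∧ Locks P (insert s L) τ Z') {Y' : ℕ → Fin r → Fin 2}
    (hY' : ∀ n ≥ ρ.length, ∀ s ∈ L, Y' n s = Z n s) :
    ∃ i < r + 1, ∀ s, ∃ᶠ n in atTop, Y i n s = Y' n s := by
  by_contra! h
  choose s hs using fun i : Fin (r + 1) => h i i.isLt
  have s_notMem (i : Fin (r + 1)) : s i ∉ L := fun hL => by
    obtain ⟨n, hne, hn⟩ := ((hs i).and (eventually_ge_atTop ρ.length)).exists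
    exact hne (((hS i).companion.2 n hn _ hL).trans (hY' n hn _ hL).symm)
  have s_ne {i j : Fin (r + 1)} (hij : i < j) : s i ≠ s j := fun hsij =>
    maximal (s j) (s_notMem j) <| exists_locks_insert hS hP hij <| by
      filter_upwards [hs i, hs j] with n hi hj
      rw [hsij] at hi
      omega
  obtain ⟨i, j, hij, hsij⟩ := Fintype.exists_ne_map_eq_of_card_lt s (by simp)
  exact hij.lt_or_gt.elim (s_ne · hsij) (s_ne · hsij.symm)

end Chain

theorem exists_maximal_locks
    (hfull : ∀ X : ℕ → Fin 3, ∃ Y : ℕ → Fin r → Fin 2, (fun n => (X n, Y n)) ∈ P) :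
    ∃ L ρ Z, Low Z ∧ Locks P L ρ Z ∧ ∀ s ∉ L, ¬∃ τ Z', Low Z' ∧ Locks P (insert s L) τ Z' := by
  obtain ⟨L, ⟨ρ, Z, hZ, hL⟩, maximal⟩ :=
    (Set.toFinite {L | ∃ ρ Z, Low Z ∧ Locks P L ρ Z}).exists_maximal
      ⟨∅, [], fun _ _ => 0, low_of_primrec (.const _), fun X =>
        let ⟨Y, hY⟩ := hfull X; ⟨Y, hY, by simp⟩⟩
  exact ⟨L, ρ, Z, hZ, hL, fun s hs h =>
    hs (maximal h (Finset.subset_insert s L) (Finset.mem_insert_self s L))⟩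

theorem exists_low_cross_pair (hP : IsPi1Class P)
    (hfull : ∀ X : ℕ → Fin 3, ∃ Y : ℕ → Fin r → Fin 2, (fun n => (X n, Y n)) ∈ P) :
    ∃ (X₀ X₁ : ℕ → Fin 3) (Y₀ Y₁ : ℕ → Fin r → Fin 2),
      (fun n => (X₀ n, Y₀ n)) ∈ P ∧ (fun n => (X₁ n, Y₁ n)) ∈ P ∧
      (∀ᶠ n in atTop, X₀ n ≠ X₁ n) ∧ (∀ s, ∃ᶠ n in atTop, Y₀ n s = Y₁ n s) ∧
      Low fun n => ((X₀ n, Y₀ n), (X₁ n, Y₁ n)) := by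
  obtain ⟨L, ρ, Z, hZ, locks, maximal⟩ := exists_maximal_locks hfull
  obtain ⟨S, H, Y, hS⟩ := exists_chain hP hZ locks
  let A := (S (r + 1)).a
  have avoid_le : ReducesTo (fun n => avoid (A n)) (S (r + 1)).O :=
    .map₂ (fun a _ => avoid a) (S (r + 1)).a_le (S (r + 1)).a_le
  obtain ⟨Y', companion, low⟩ :=
    locks.exists_companion hP (S (r + 1)).low (S (r + 1)).lock_le avoid_le
  obtain ⟨i, hi, frequently_eq⟩ := chain_exists_frequently_eq hS hP maximal companion.2
  refine ⟨overwrite ρ fun n => switch ((S i).a n) (H i n), overwrite ρ fun n => avoid (A n),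
    Y i, Y', (hS i).companion.1, companion.1, ?_, frequently_eq, ReducesTo.low ?_ low⟩
  · filter_upwards [eventually_ge_atTop ρ.length] with n hn
    rw [overwrite_of_length_le _ hn, overwrite_of_length_le _ hn]
    exact chain_switch_ne_avoid hS hi n
  · have next_le := (chain_oracle_le hS hi).trans (.fst (O := Y'))
    have X_le := ((hS i).generic_le.map₂ (fun h a => switch a h)
      ((S i).a_le.trans (hS i).oracle_le)).trans next_le
    exact ((X_le.overwrite ρ).prodMk ((hS i).companion_le.trans next_le)).prodMk
      (((avoid_le.trans .fst).overwrite ρ).prodMk .snd)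

end CrossConstraint

section OracleMachines

open OmegaCompletePartialOrder ContinuousHom

/-- Evaluation of an oracle code with a partial oracle: the computation diverges as soon as it
queries the oracle outside its domain. -/
def peval (P : ℕ → Part ℕ) : OCode → ℕ →. ℕ
  | .zero => pure 0
  | .succ => Nat.succ
  | .left => ↑fun n : ℕ => n.unpair.1
  | .right => ↑fun n : ℕ => n.unpair.2
  | .oracle => P
  | .pair a b => fun n => Nat.pair <$> peval P a n <*> peval P b n
  | .comp a b => fun n => peval P b n >>= peval P a
  | .prec a b =>
    Nat.unpaired fun x n => n.rec (peval P a x) fun y IH => do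
      let i ← IH
      peval P b (Nat.pair x (Nat.pair y i))
  | .rfind' a =>
    Nat.unpaired fun x m =>
      (Nat.rfind fun n => (fun m => m = 0) <$> peval P a (Nat.pair x (n + m))).map (· + m)

theorem peval_some (O : ℕ → ℕ) (c : OCode) : peval (fun n => .some (O n)) c = oeval O c := by
  induction c with
  | zero | succ | left | right | oracle => rfl
  | pair a b iha ihb | comp a b iha ihb | prec a b iha ihb =>
    simp only [peval, oeval, iha, ihb]; rfl
  | rfind' a iha => simp only [peval, oeval, iha]; rfl

theorem rfind_mono {p q : ℕ → Part Bool} (h : p ≤ q) : Nat.rfind p ≤ Nat.rfind q := fun _ hn =>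
  Nat.mem_rfind.2 ⟨h _ _ (Nat.rfind_spec hn), fun hm => h _ _ (Nat.rfind_min hn hm)⟩

theorem mem_ωSup_iff_exists {α : Type*} {c : Chain (Part α)} {x : α} : x ∈ ωSup c ↔ ∃ i, x ∈ c i :=
  (Part.mem_ωSup x c).trans (exists_congr fun _ => eq_comm.trans Part.eq_some_iff)

theorem ωScottContinuous_rfind : ωScottContinuous fun p : ℕ → Part Bool => Nat.rfind p := by
  refine .of_monotone_map_ωSup ⟨fun p q h => rfind_mono h, fun c => le_antisymm ?_ ?_⟩
  · intro n hn
    have halted : ∀ m, ∃ j, m ≤ n → decide (m = n) ∈ c j m := fun m => by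
      rcases lt_trichotomy m n with hm | rfl | hm
      · obtain ⟨j, hj⟩ := mem_ωSup_iff_exists.1 (Nat.rfind_min hn hm)
        exact ⟨j, fun _ => by simpa [hm.ne] using hj⟩
      · obtain ⟨j, hj⟩ := mem_ωSup_iff_exists.1 (Nat.rfind_spec hn)
        exact ⟨j, fun _ => by simpa using hj⟩
      · exact ⟨0, fun h => absurd h hm.not_ge⟩
    choose j hj using halted
    let J := (Finset.range (n + 1)).sup j
    have halted_jointly : ∀ m ≤ n, decide (m = n) ∈ c J m := fun m hm =>
      c.monotone (Finset.le_sup (Finset.mem_range_succ_iff.2 hm)) _ _ (hj m hm)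
    refine mem_ωSup_iff_exists.2 ⟨J, Nat.mem_rfind.2 ⟨?_, fun {m} hm => ?_⟩⟩
    · simpa using halted_jointly n le_rfl
    · simpa [hm.ne] using halted_jointly m hm.le
  · exact ωSup_le _ _ fun i => rfind_mono (le_ωSup c i)

theorem ωScottContinuous_peval (c : OCode) (n : ℕ) : ωScottContinuous fun P => peval P c n := by
  induction c generalizing n with
  | zero | succ | left | right => exact .const
  | oracle => exact .apply n
  | pair a b iha ihb => exact ωScottContinuous.seq (ωScottContinuous.map (iha n)) (ihb n)
  | comp a b iha ihb => exact ωScottContinuous.bind (ihb n) (.of_apply₂ iha)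
  | prec a b iha ihb =>
    simp only [peval, Nat.unpaired]
    induction n.unpair.2 with
    | zero => exact iha _
    | succ y ih => exact ωScottContinuous.bind ih (.of_apply₂ fun i => ihb _)
  | rfind' a iha =>
    exact ωScottContinuous.map (ωScottContinuous_rfind.comp
      (.of_apply₂ fun i => ωScottContinuous.map (iha _)))

/-- The partial oracle with the finitely many values listed in `l`. -/
def finiteOracle (l : List ℕ) : ℕ → Part ℕ := fun i => l[i]?

theorem dom_oeval_iff_exists_seg {O : ℕ → ℕ} {c : OCode} {n : ℕ} :
    (oeval O c n).Dom ↔ ∃ k, (peval (finiteOracle (seg O k)) c n).Dom := by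
  have mem_finiteOracle : ∀ k i y, y ∈ finiteOracle (seg O k) i ↔ i < k ∧ O i = y := by
    intro k i y
    simp [finiteOracle, getElem?_seg]
  let segments : Chain (ℕ → Part ℕ) := ⟨fun k => finiteOracle (seg O k), fun k k' hk i y => by
    simpa only [mem_finiteOracle] using And.imp_left hk.trans_lt'⟩
  have ωSup_segments : ωSup segments = fun i => .some (O i) := by
    funext i
    refine Part.ext fun y => ?_
    have queried : y ∈ ωSup segments i ↔ ∃ k, y ∈ finiteOracle (seg O k) i := mem_ωSup_iff_exists
    simpa [queried, mem_finiteOracle, eq_comm] using fun _ => ⟨i + 1, i.lt_succ_self⟩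
  rw [← peval_some, ← ωSup_segments, (ωScottContinuous_peval c n).map_ωSup]
  simp only [Part.dom_iff_mem, mem_ωSup_iff_exists]
  exact exists_comm

/-- The ordinary code obtained from the oracle code numbered `n` by replacing the oracle calls by
calls to the code `o`. -/
def substOracle (o : Code) : ℕ → Code
  | 0 => .zero
  | 1 => .succ
  | 2 => .left
  | 3 => .right
  | 4 => o
  | n + 5 =>
    have : (n / 4).unpair.1 < n + 5 := (Nat.unpair_left_le _).trans_lt (by omega)
    have : (n / 4).unpair.2 < n + 5 := (Nat.unpair_right_le _).trans_lt (by omega)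
    match n % 4 with
    | 0 => .pair (substOracle o (n / 4).unpair.1) (substOracle o (n / 4).unpair.2)
    | 1 => .comp (substOracle o (n / 4).unpair.1) (substOracle o (n / 4).unpair.2)
    | 2 => .prec (substOracle o (n / 4).unpair.1) (substOracle o (n / 4).unpair.2)
    | _ => .rfind' (substOracle o (n / 4))

theorem eval_substOracle (o : Code) (c : OCode) :
    (substOracle o (encodeOCode c)).eval = peval o.eval c := by
  induction c with
  | zero | succ | left | right | oracle => simp only [encodeOCode, substOracle]; rfl
  | pair a b iha ihb | comp a b iha ihb | prec a b iha ihb =>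
    simp [encodeOCode, substOracle, peval, Code.eval, iha, ihb, Nat.add_div, Nat.add_mod]
    rfl
  | rfind' a iha =>
    simp [encodeOCode, substOracle, peval, Code.eval, iha, Nat.add_div, Nat.add_mod]
    rfl

theorem encodeOCode_surjective : Function.Surjective encodeOCode := by
  intro n
  induction n using Nat.strong_induction_on with
  | _ n ih =>
    rcases lt_or_ge n 5 with hn | hn
    · interval_cases n
      exacts [⟨.zero, rfl⟩, ⟨.succ, rfl⟩, ⟨.left, rfl⟩, ⟨.right, rfl⟩, ⟨.oracle, rfl⟩]
    · obtain ⟨a, ha⟩ := ih ((n - 5) / 4).unpair.1 ((Nat.unpair_left_le _).trans_lt (by omega))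
      obtain ⟨b, hb⟩ := ih ((n - 5) / 4).unpair.2 ((Nat.unpair_right_le _).trans_lt (by omega))
      obtain ⟨c, hc⟩ := ih ((n - 5) / 4) (by omega)
      have residue : (n - 5) % 4 < 4 := Nat.mod_lt _ (by norm_num)
      interval_cases h : (n - 5) % 4
      · exact ⟨.pair a b, by rw [encodeOCode, ha, hb, Nat.pair_unpair]; omega⟩
      · exact ⟨.comp a b, by rw [encodeOCode, ha, hb, Nat.pair_unpair]; omega⟩
      · exact ⟨.prec a b, by rw [encodeOCode, ha, hb, Nat.pair_unpair]; omega⟩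
      · exact ⟨.rfind' c, by rw [encodeOCode, hc]; omega⟩

/-- The course-of-values step computing `substOracle o L.length` from the list `L` of the previous
values. -/
def substOracleStep (o : Code) (L : List Code) : Code :=
  let n := L.length - 5
  let a := L.getD (n / 4).unpair.1 .zero
  let b := L.getD (n / 4).unpair.2 .zero
  [Code.zero, .succ, .left, .right, o].getD L.length
    ([a.pair b, a.comp b, a.prec b, (L.getD (n / 4) .zero).rfind'].getD (n % 4) .zero)

theorem substOracleStep_map_range (o : Code) (n : ℕ) :
    substOracleStep o ((List.range n).map (substOracle o)) = substOracle o n := by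
  rcases lt_or_ge n 5 with hn | hn
  · interval_cases n <;> simp [substOracleStep, substOracle]
  · obtain ⟨n, rfl⟩ := Nat.exists_eq_add_of_le' hn
    have previous : ∀ i < n + 5, ((List.range (n + 5)).map (substOracle o)).getD i .zero =
        substOracle o i := fun i hi => by simp [List.getD, hi]
    have left_lt : (n / 4).unpair.1 < n + 5 := (Nat.unpair_left_le _).trans_lt (by omega)
    have right_lt : (n / 4).unpair.2 < n + 5 := (Nat.unpair_right_le _).trans_lt (by omega)
    have residue : n % 4 < 4 := Nat.mod_lt _ (by norm_num)
    rw [substOracle]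
    simp only [substOracleStep, List.length_map, List.length_range, Nat.add_sub_cancel,
      previous _ left_lt, previous _ right_lt, previous (n / 4) (by omega)]
    interval_cases n % 4 <;> simp

theorem primrec_substOracle : Primrec₂ substOracle := by
  have values : Primrec fun x : Code × List Code => x.2 := .snd
  have length : Primrec fun x : Code × List Code => x.2.length := Primrec.list_length.comp values
  have index : Primrec fun x : Code × List Code => x.2.length - 5 :=
    Primrec.nat_sub.comp length (.const 5)
  have body : Primrec fun x : Code × List Code => (x.2.length - 5) / 4 :=
    Primrec.nat_div.comp index (.const 4)
  have a : Primrec fun x : Code × List Code => x.2.getD ((x.2.length - 5) / 4).unpair.1 .zero :=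
    (Primrec.list_getD _).comp values (Primrec.fst.comp (Primrec.unpair.comp body))
  have b : Primrec fun x : Code × List Code => x.2.getD ((x.2.length - 5) / 4).unpair.2 .zero :=
    (Primrec.list_getD _).comp values (Primrec.snd.comp (Primrec.unpair.comp body))
  have c : Primrec fun x : Code × List Code => x.2.getD ((x.2.length - 5) / 4) .zero :=
    (Primrec.list_getD _).comp values body
  have composites := Primrec.list_cons.comp (Code.primrec₂_pair.comp a b) <|
    Primrec.list_cons.comp (Code.primrec₂_comp.comp a b) <|
    Primrec.list_cons.comp (Code.primrec₂_prec.comp a b) <|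
    Primrec.list_cons.comp (Code.primrec_rfind'.comp c) (.const [])
  have basics := Primrec.list_cons.comp (.const Code.zero) <|
    Primrec.list_cons.comp (.const Code.succ) <| Primrec.list_cons.comp (.const Code.left) <|
    Primrec.list_cons.comp (.const Code.right) <|
    Primrec.list_cons.comp (.fst (α := Code) (β := List Code)) (.const [])
  have step : Primrec₂ substOracleStep :=
    Primrec.option_getD.comp (Primrec.list_getElem?.comp basics length) <|
      (Primrec.list_getD _).comp composites (Primrec.nat_mod.comp index (.const 4))
  exact Primrec.nat_strong_rec _ (Primrec.option_some.comp step).to₂ fun o n =>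
    congrArg some (substOracleStep_map_range o n)

theorem encodeOCode_injective : Function.Injective encodeOCode := by
  intro a
  induction a <;> intro b h <;> cases b <;> grind [encodeOCode, Nat.pair_eq_pair]

theorem pair_mem_jump_iff {O : ℕ → ℕ} {c : OCode} {n : ℕ} :
    Nat.pair (encodeOCode c) n ∈ jump O ↔ (oeval O c n).Dom := by
  simp [jump, encodeOCode_injective.eq_iff]

theorem exists_finiteOracle_code :
    ∃ c : Code, ∀ l : List ℕ, (c.curry (encode l)).eval = finiteOracle l := by
  have lookup : Computable fun n : ℕ => (Denumerable.ofNat (List ℕ) n.unpair.1)[n.unpair.2]? :=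
    (Primrec.list_getElem?.comp ((Primrec.ofNat (List ℕ)).comp (Primrec.fst.comp .unpair))
      (Primrec.snd.comp .unpair)).to_comp
  obtain ⟨c, hc⟩ := Code.exists_code.1 (Partrec.nat_iff.1 lookup.ofOption)
  exact ⟨c, fun l => funext fun i => by simp [Code.eval_curry, hc, finiteOracle]⟩

theorem isSigma1_jump : IsSigma1 fun (O : ℕ → ℕ) n => n ∈ jump O := by
  obtain ⟨c, hc⟩ := exists_finiteOracle_code
  let R (x : List ℕ × ℕ) : Prop :=
    ((substOracle (c.curry (encode x.1)) x.2.unpair.1).eval x.2.unpair.2).Dom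
  have hR : REPred R := by
    have code : Primrec fun x : List ℕ × ℕ => substOracle (c.curry (encode x.1)) x.2.unpair.1 :=
      primrec_substOracle.comp
        (Code.primrec₂_curry.comp (.const c) (Primrec.encode.comp .fst))
        (Primrec.fst.comp (Primrec.unpair.comp .snd))
    exact (Code.eval_part.comp code.to_comp
      (Primrec.snd.comp (Primrec.unpair.comp .snd)).to_comp).dom_re
  refine ⟨R, hR, fun O n => ?_⟩
  obtain ⟨a, ha⟩ := encodeOCode_surjective n.unpair.1
  beta_reduce
  rw [← Nat.pair_unpair n, ← ha, pair_mem_jump_iff, dom_oeval_iff_exists_seg]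
  simp only [R, Nat.unpair_pair, eval_substOracle, hc]

theorem partrec_oeval_zeroO (c : OCode) : Partrec (oeval zeroO c) := by
  rw [← peval_some]
  exact Partrec.nat_iff.2 (Code.exists_code.2 ⟨_, eval_substOracle .zero c⟩)

theorem RecIn.computable {f : ℕ → ℕ} (hf : RecIn zeroO f) : Computable f := by
  obtain ⟨c, hc⟩ := hf
  exact (partrec_oeval_zeroO c).of_eq hc

theorem exists_oeval_eq_of_recursiveIn {O : ℕ → ℕ} {f : ℕ →. ℕ}
    (hf : Nat.RecursiveIn {(O : ℕ →. ℕ)} f) : ∃ c, oeval O c = f := by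
  induction hf with
  | zero => exact ⟨.zero, rfl⟩
  | succ => exact ⟨.succ, rfl⟩
  | left => exact ⟨.left, rfl⟩
  | right => exact ⟨.right, rfl⟩
  | oracle g hg => exact ⟨.oracle, (Set.mem_singleton_iff.1 hg).symm⟩
  | pair _ _ iha ihb =>
    obtain ⟨⟨a, rfl⟩, ⟨b, rfl⟩⟩ := And.intro iha ihb
    exact ⟨.pair a b, rfl⟩
  | comp _ _ iha ihb =>
    obtain ⟨⟨a, rfl⟩, ⟨b, rfl⟩⟩ := And.intro iha ihb
    exact ⟨.comp a b, rfl⟩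
  | prec _ _ iha ihb =>
    obtain ⟨⟨a, rfl⟩, ⟨b, rfl⟩⟩ := And.intro iha ihb
    exact ⟨.prec a b, rfl⟩
  | rfind _ iha =>
    obtain ⟨a, rfl⟩ := iha
    refine ⟨.comp (.rfind' a) (.pair (.pair .left .right) .zero), ?_⟩
    funext n
    simp [oeval, Seq.seq, pure, PFun.pure, Part.map_id']

theorem RecIn.of_recursiveIn {O f : ℕ → ℕ} (hf : Nat.RecursiveIn {(O : ℕ →. ℕ)} f) : RecIn O f := by
  obtain ⟨c, hc⟩ := exists_oeval_eq_of_recursiveIn hf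
  exact ⟨c, fun n => congrFun hc n⟩

theorem exists_primrec_mem_emptyJump_iff {p : ℕ → Prop} (hp : REPred p) :
    ∃ h : ℕ → ℕ, Primrec h ∧ ∀ n, h n ∈ emptyJump ↔ p n := by
  obtain ⟨c, hc⟩ := exists_oeval_eq_of_recursiveIn (O := zeroO)
    (Nat.Partrec.recursiveIn (Partrec.nat_iff.1 (hp.map (Computable.const 0).to₂)))
  refine ⟨fun n => Nat.pair (encodeOCode c) n, Primrec₂.natPair.comp (.const _) .id, fun n => ?_⟩
  rw [emptyJump, pair_mem_jump_iff, hc]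
  simp [Part.assert]

theorem recIn_emptyJump_of_isSigma2_graph {f : ℕ → ℕ}
    (hf : IsSigma2 fun x : ℕ × ℕ => f x.1 = x.2) : RecIn (chi emptyJump) f := by
  obtain ⟨R, hR, hfR⟩ := hf
  obtain ⟨h, hh, hhR⟩ := exists_primrec_mem_emptyJump_iff
    (p := fun n => ¬R ((n.unpair.1, n.unpair.2.unpair.1), n.unpair.2.unpair.2))
    (rePred_comp hR (.pair (.pair (Primrec.fst.comp .unpair)
      (Primrec.fst.comp (Primrec.unpair.comp (Primrec.snd.comp .unpair))))
      (Primrec.snd.comp (Primrec.unpair.comp (Primrec.snd.comp .unpair)))))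
  have chi_eq_zero_iff : ∀ x t, chi emptyJump (h (Nat.pair x t)) = 0 ↔
      R ((x, t.unpair.1), t.unpair.2) := fun x t => by
    rw [← not_iff_not]
    simpa [chi] using hhR (Nat.pair x t)
  have test : Nat.RecursiveIn {(chi emptyJump : ℕ →. ℕ)} fun n => chi emptyJump (h n) :=
    (Nat.RecursiveIn.comp (.oracle _ (Set.mem_singleton _))
      (Primrec.nat_iff.1 hh).recursiveIn).of_eq fun _ => Part.bind_some _ _
  refine .of_recursiveIn ((Nat.RecursiveIn.comp .left (.rfind test)).of_eq_tot fun x => ?_)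
  obtain ⟨a, ha⟩ := (hfR (x, f x)).1 rfl
  have true_mem_iff : ∀ t, true ∈ (fun m : ℕ => decide (m = 0)) <$>
      (↑(some (chi emptyJump (h (Nat.pair x t)))) : Part ℕ) ↔ R ((x, t.unpair.1), t.unpair.2) :=
    fun t => by simp [← chi_eq_zero_iff, eq_comm]
  have halts : (Nat.rfind fun t => (fun m : ℕ => decide (m = 0)) <$>
      (↑(some (chi emptyJump (h (Nat.pair x t)))) : Part ℕ)).Dom :=
    Nat.rfind_dom.2 ⟨Nat.pair (f x) a, (true_mem_iff _).2 (by simpa using ha), fun _ => trivial⟩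
  obtain ⟨t, ht⟩ := Part.dom_iff_mem.1 halts
  have correct : f x = t.unpair.1 :=
    (hfR (x, t.unpair.1)).2 ⟨_, (true_mem_iff t).1 (Nat.rfind_spec ht)⟩
  exact Part.mem_bind ht (by simp [correct])

end OracleMachines

section CrossTrees

variable {r : ℕ} {T : CrossTree r}

/-- The node of `3^{<ℕ} × (2^{<ℕ})^r` whose entries are listed coordinatewise by `l`. -/
def node (l : List (Fin 3 × (Fin r → Fin 2))) : Str3 × StrTup r :=
  (l.map Prod.fst, fun s => l.map fun v => v.2 s)

theorem node_seg (V : ℕ → Fin 3 × (Fin r → Fin 2)) (n : ℕ) :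
    node (seg V n) = (seg (fun i => (V i).1) n, fun s => seg (fun i => (V i).2 s) n) := by
  simp only [node, seg_comp (fun v : Fin 3 × (Fin r → Fin 2) => v.1) V,
    fun s => seg_comp (fun v : Fin 3 × (Fin r → Fin 2) => v.2 s) V]

theorem primrec_encNode_node : Primrec fun l => encNode (node (r := r) l) :=
  Primrec₂.natPair.comp (Primrec.encode.comp (Primrec.list_map .id (Primrec.fst.comp .snd).to₂))
    (Primrec.encode.comp (Primrec.list_ofFn fun s =>
      Primrec.list_map .id ((Primrec.dom_finite fun v : Fin 3 × (Fin r → Fin 2) => v.2 s).comp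
        .snd).to₂))

theorem encNode_injective : Function.Injective (encNode (r := r)) := by
  rintro ⟨x, y⟩ ⟨x', y'⟩ h
  simpa only [encNode, Nat.pair_eq_pair, encode_inj, List.ofFn_injective.eq_iff,
    ← Prod.mk.injEq] using h

theorem chi_encNode_eq_zero_iff {p : Str3 × StrTup r} :
    chi {n | ∃ q ∈ T.mem, encNode q = n} (encNode p) = 0 ↔ p ∉ T.mem := by
  simp only [chi, Set.indicator_apply_eq_zero, one_ne_zero, imp_false, Set.mem_ofPred_eq,
    encNode_injective.eq_iff, exists_eq_right]

theorem TreeComputable.isPi1Class_isPath (hT : TreeComputable T) :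
    IsPi1Class {V : ℕ → Fin 3 × (Fin r → Fin 2) |
      IsPath T (fun n => (V n).1) fun s n => (V n).2 s} := by
  have off_tree : ComputablePred fun l : List (Fin 3 × (Fin r → Fin 2)) =>
      chi {n | ∃ p ∈ T.mem, encNode p = n} (encNode (node l)) = 0 :=
    Computable.computablePred <| Primrec.eq.decide.to_comp.comp
      ((RecIn.computable hT).comp primrec_encNode_node.to_comp) (.const 0)
  refine ⟨_, rePred_comp off_tree.to_re .fst, fun V _ => ?_⟩
  simp only [IsPath, Set.mem_ofPred_eq, not_forall, chi_encNode_eq_zero_iff, node_seg]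

theorem LeftFull.exists_isPath (hT : LeftFull T) (X : ℕ → Fin 3) :
    ∃ Y : ℕ → Fin r → Fin 2, IsPath T X fun s n => Y n s := by
  obtain ⟨Y, -, path⟩ := hT X fun i => i.elim0
  exact ⟨fun n s => Y s n, path⟩

theorem exists_infinite_setOf_eq {β : Type*} [Finite β] {f g : ℕ → β}
    (h : ∃ᶠ n in atTop, f n = g n) : ∃ b, {n | f n = b ∧ g n = b}.Infinite := by
  simp only [← Nat.frequently_atTop_iff_infinite, ← frequently_exists]
  exact h.mono fun n hn => ⟨f n, rfl, hn.symm⟩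

theorem finite_setOf_eq {β : Type*} {f g : ℕ → β} (h : ∀ᶠ n in atTop, f n ≠ g n) (b : β) :
    {n | f n = b ∧ g n = b}.Finite := by
  rw [← Set.not_infinite, ← Nat.frequently_atTop_iff_infinite, not_frequently]
  exact h.mono fun n hn hb => hn (hb.1.trans hb.2.symm)

theorem ccSolution_of_isPath {X₀ X₁ : ℕ → Fin 3} {Y₀ Y₁ : ℕ → Fin r → Fin 2}
    (path₀ : IsPath T X₀ fun s n => Y₀ n s) (path₁ : IsPath T X₁ fun s n => Y₁ n s)
    (left : ∀ᶠ n in atTop, X₀ n ≠ X₁ n) (right : ∀ s, ∃ᶠ n in atTop, Y₀ n s = Y₁ n s) :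
    CCSolution T ![X₀, X₁] ![fun s n => Y₀ n s, fun s n => Y₁ n s] :=
  ⟨Fin.forall_fin_two.2 ⟨path₀, path₁⟩, finite_setOf_eq left,
    fun s => exists_infinite_setOf_eq (right s)⟩

/-- The entry of `solOracle X Y` at `n`, as a function of `n` and of the value of the path at
`n.unpair.2`. -/
def solEntry (n : ℕ) (v : Fin 3 × (Fin r → Fin 2)) : ℕ :=
  ((v.1 : ℕ) :: List.ofFn fun s => (v.2 s : ℕ)).getD n.unpair.1 0

theorem solOracle_eq_solEntry (X : ℕ → Fin 3) (Y : ℕ → Fin r → Fin 2) (n : ℕ) :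
    solOracle X (fun s n => Y n s) n = solEntry n (X n.unpair.2, Y n.unpair.2) := by
  unfold solOracle solEntry
  rcases n.unpair.1 with _ | i
  · simp
  · by_cases hi : i < r <;> simp [hi]

theorem primrec₂_solEntry : Primrec₂ (solEntry (r := r)) :=
  (Primrec.list_getD 0).comp ((Primrec.dom_finite fun v : Fin 3 × (Fin r → Fin 2) =>
    (v.1 : ℕ) :: List.ofFn fun s => (v.2 s : ℕ)).comp .snd)
    (Primrec.fst.comp (Primrec.unpair.comp .fst))

theorem Low.joinF_solOracle {X₀ X₁ : ℕ → Fin 3} {Y₀ Y₁ : ℕ → Fin r → Fin 2}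
    (h : Low fun n => ((X₀ n, Y₀ n), (X₁ n, Y₁ n))) :
    Low (joinF (solOracle X₀ fun s n => Y₀ n s) (solOracle X₁ fun s n => Y₁ n s)) := by
  have half : Primrec fun m => m / 2 := Primrec.nat_div.comp .id (.const 2)
  have entry : Primrec₂ fun (m : ℕ) (w : (Fin 3 × (Fin r → Fin 2)) × Fin 3 × (Fin r → Fin 2)) =>
      if m % 2 = 0 then solEntry (m / 2) w.1 else solEntry (m / 2) w.2 :=
    .ite (Primrec.eq.comp (Primrec.nat_mod.comp .fst (.const 2)) (.const 0))
      (primrec₂_solEntry.comp (half.comp .fst) (Primrec.fst.comp .snd))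
      (primrec₂_solEntry.comp (half.comp .fst) (Primrec.snd.comp .snd))
  unfold joinF
  simp only [solOracle_eq_solEntry]
  exact h.comap entry
    (Primrec.snd.comp (Primrec.unpair.comp half)) fun m =>
    (Nat.unpair_right_le _).trans (Nat.div_le_self m 2)

theorem IsDelta2.chi_graph {A : Set ℕ} (hA : IsDelta2 fun n => n ∈ A) :
    IsSigma2 fun x : ℕ × ℕ => chi A x.1 = x.2 := by
  have value_eq (k : ℕ) : IsSigma2 fun x : ℕ × ℕ => x.2 = k :=
    .of_rePred (rePred_of_primrecPred (Primrec.eq.comp .snd (.const k)))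
  have graph : ∀ n y, chi A n = y ↔ n ∈ A ∧ y = 1 ∨ n ∉ A ∧ y = 0 := fun n y => by
    by_cases h : n ∈ A <;> simp [chi, h, eq_comm]
  simp only [graph]
  exact ((hA.1.comp .fst).and (value_eq 1)).or ((hA.2.comp .fst).and (value_eq 0))

theorem Low.recIn_emptyJump_chi_jump {O : ℕ → ℕ} (hO : Low O) :
    RecIn (chi emptyJump) (chi (jump O)) :=
  recIn_emptyJump_of_isSigma2_graph (hO isSigma1_jump).chi_graph

end CrossTrees

end Paper

namespace Paper

/-- Cross-constraint low basis theorem: every left-full computable instance of the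
cross-constraint problem has a solution whose join is low. -/
theorem cc_low_basis (r : ℕ) (T : CrossTree r)
    (hcomp : TreeComputable T) (hfull : LeftFull T) :
    ∃ (X : Fin 2 → ℕ → Fin 3) (Y : Fin 2 → Fin r → ℕ → Fin 2),
      CCSolution T X Y ∧
      RecIn (chi emptyJump)
        (chi (jump (joinF (solOracle (X 0) (Y 0)) (solOracle (X 1) (Y 1))))) := by
  obtain ⟨X₀, X₁, Y₀, Y₁, path₀, path₁, left, right, low⟩ :=
    exists_low_cross_pair hcomp.isPi1Class_isPath hfull.exists_isPath
  exact ⟨![X₀, X₁], ![fun s n => Y₀ n s, fun s n => Y₁ n s],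
    ccSolution_of_isPath path₀ path₁ left right, low.joinF_solOracle.recIn_emptyJump_chi_jump⟩

end Paper
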